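/- arXiv:2511.04314 — 3 statements merged into one kernel-verified Lean document; each statement's English description precedes it below -/
import Mathlib

section
/- There is no separable commutative complex Banach algebra B such that every separable commutative complex Banach algebra A admits a contractive homomorphic embedding into B; that is, for every separable commutative Banach algebra B there exists a separable commutative Banach algebra A such that no injective algebra homomorphism φ : A → B satisfies both ‖φ(a)‖ ≤ ‖a‖ for all a and the existence of c > 0 with c‖a‖ ≤ ‖φ(a)‖ for all a. -/
/-- A bundled separable commutative complex Banach algebra: a complete normed
(not necessarily unital) commutative ring which is a normed space over `ℂ`
whose multiplication is `ℂ`-bilinear, and whose underlying metric space is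
separable. -/
structure SepCommBanachAlgebra : Type 1 where
  carrier : Type
  [ring : NonUnitalNormedCommRing carrier]
  [normedSpace : NormedSpace ℂ carrier]
  [tower : IsScalarTower ℂ carrier carrier]
  [smulComm : SMulCommClass ℂ carrier carrier]
  [complete : CompleteSpace carrier]
  [separable : TopologicalSpace.SeparableSpace carrier]

attribute [instance] SepCommBanachAlgebra.ring SepCommBanachAlgebra.normedSpace
  SepCommBanachAlgebra.tower SepCommBanachAlgebra.smulComm
  SepCommBanachAlgebra.complete SepCommBanachAlgebra.separable

/-!
A pairing `p` of norm at most `1` between Banach spaces `X` and `Y` makes `X × Y × ℂ` a commutative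
Banach algebra with product `(x, y, z) * (x', y', z') = (0, 0, (p y' x + p y x') / 2)`. A continuous
injective homomorphism from it into `B` yields continuous linear maps `P : X → B`, `Q : Y → B` and
an element `z ≠ 0` with `P x * Q y = p y x • z`.

Davie's construction of a Banach space without the approximation property depends on a choice of
signs on each level, and is run here once for every branch `s : ℕ → Bool` of choices. The branch
space `X_s` has generators `e_{k,j}` with biorthogonal functionals `α_{k,j}` in a separable space
`Y_s`. For two branches let `b_k` be the average over `j` of `P_s e^s_{k,j} * Q_t α^t_{k,j}`. From
one level to the next `b_k` changes by a summable error while the branches agree, and `b_k` itself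
is small where they differ. So if `s ≠ t` agree up to a high level `K`, then `b_K` is small. There
are uncountably many branches and `B` is separable, so some two distinct branches agree up to level
`K` and have `P_s ≈ P_t` on the generators of level `K`. By biorthogonality `b_K` is then close to
`z_t`, which is bounded below: a contradiction.
-/

section Average

variable {ι κ V W Z : Type*} [Fintype ι] [Fintype κ]
  [AddCommGroup V] [Module ℂ V] [AddCommGroup W] [Module ℂ W] [AddCommGroup Z] [Module ℂ Z]

/-- The average of a finite family of vectors. Mathlib's `Finset.expect` does not apply, since it
asks for a `ℚ≥0`-module structure on the ambient space. -/
noncomputable def average (f : ι → V) : V :=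
  (Fintype.card ι : ℂ)⁻¹ • ∑ i, f i

theorem average_const [Nonempty ι] (v : V) : average (fun _ : ι => v) = v := by
  simp [average, ← Nat.cast_smul_eq_nsmul ℂ]

theorem average_sub (f g : ι → V) :
    average (fun i => f i - g i) = average f - average g := by
  simp [average, smul_sub]

theorem average_neg (f : ι → V) : average (fun i => -f i) = -average f := by
  simp [average]

theorem average_smul (c : ℂ) (f : ι → V) : average (fun i => c • f i) = c • average f := by
  simp only [average, ← Finset.smul_sum, smul_comm c]

theorem average_comm (f : ι → κ → V) :
    average (fun i => average (f i)) = average fun k => average fun i => f i k := by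
  simp only [average, ← Finset.smul_sum]
  rw [Finset.sum_comm, smul_comm]

theorem map_average {F : Type*} [FunLike F V W] [LinearMapClass F ℂ V W] (L : F) (f : ι → V) :
    L (average f) = average fun i => L (f i) := by
  simp [average, map_sum]

theorem average_bilin_swap (T : V →ₗ[ℂ] W →ₗ[ℂ] Z) (w : ι → κ → ℂ) (x : ι → V) (y : κ → W) :
    average (fun i => T (x i) (average fun k => w i k • y k)) =
      average fun k => T (average fun i => w i k • x i) (y k) := by
  simp only [map_average, map_smul]
  rw [average_comm]
  exact congrArg average <| funext fun k =>
    (map_average (LinearMap.applyₗ (y k)) fun i => w i k • T (x i)).symm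

theorem average_cons {n : ℕ} {α : Type*} [Fintype α] (f : (Fin (n + 1) → α) → V) :
    average f = average fun a => average fun x : Fin n → α => f (Fin.cons a x) := by
  simp only [average, ← Finset.smul_sum, smul_smul, ← Fintype.sum_prod_type',
    ← (Fin.consEquiv fun _ : Fin (n + 1) => α).sum_comp]
  simp [Fin.consEquiv, pow_succ, mul_comm]

theorem average_units_int (f : ℤˣ → V) : average f = (2⁻¹ : ℂ) • (f 1 + f (-1)) := by
  simp [average, UnitsInt.univ]

theorem norm_average_le {E : Type*} [SeminormedAddCommGroup E] [NormedSpace ℂ E] [Nonempty ι]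
    {f : ι → E} {C : ℝ} (hf : ∀ i, ‖f i‖ ≤ C) : ‖average f‖ ≤ C := by
  have hsum : ‖∑ i, f i‖ ≤ Fintype.card ι * C := by
    simpa using norm_sum_le_of_le Finset.univ fun i _ => hf i
  have hcard : (0 : ℝ) < Fintype.card ι := by exact_mod_cast Fintype.card_pos
  rw [average, norm_smul, norm_inv, RCLike.norm_natCast, inv_mul_le_iff₀ hcard]
  exact hsum

end Average

section RandomSigns

variable {I J : Type*} [Fintype I] [Fintype J]

theorem sum_exp_signs_le [DecidableEq J] {a : J → ℝ} (ha : ∀ j, |a j| ≤ 1) (θ : ℝ) :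
    ∑ e : J → ℤˣ, Real.exp (θ * ∑ j, e j * a j) ≤
      2 ^ Fintype.card J * Real.exp (θ ^ 2 * Fintype.card J / 2) := by
  have hfactor (j : J) : ∑ x : ℤˣ, Real.exp (θ * (x * a j)) ≤ 2 * Real.exp (θ ^ 2 / 2) := by
    have hsq : (θ * a j) ^ 2 / 2 ≤ θ ^ 2 / 2 := by
      have := (sq_le_one_iff_abs_le_one (a j)).2 (ha j)
      rw [mul_pow]
      nlinarith [sq_nonneg θ]
    calc ∑ x : ℤˣ, Real.exp (θ * (x * a j)) = 2 * Real.cosh (θ * a j) := by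
          simp [UnitsInt.univ, Real.cosh_eq]
          ring
      _ ≤ 2 * Real.exp ((θ * a j) ^ 2 / 2) := by gcongr; exact Real.cosh_le_exp_half_sq _
      _ ≤ 2 * Real.exp (θ ^ 2 / 2) := by gcongr
  calc ∑ e : J → ℤˣ, Real.exp (θ * ∑ j, e j * a j)
      = ∏ j, ∑ x : ℤˣ, Real.exp (θ * (x * a j)) := by
        simp only [Fintype.prod_sum, Finset.mul_sum, Real.exp_sum]
    _ ≤ ∏ _j : J, 2 * Real.exp (θ ^ 2 / 2) :=
        Finset.prod_le_prod (fun _ _ => by positivity) fun j _ => hfactor j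
    _ = 2 ^ Fintype.card J * Real.exp (θ ^ 2 * Fintype.card J / 2) := by
        rw [Finset.prod_const, Finset.card_univ, mul_pow, ← Real.exp_nat_mul]
        ring_nf

theorem exists_signs_abs_sum_le {θ : ℝ} (hθ : 0 < θ) {a : I → J → ℝ} (ha : ∀ i j, |a i j| ≤ 1)
    (hI : 2 * Fintype.card I < Real.exp (θ ^ 2 * Fintype.card J / 2)) :
    ∃ e : J → ℤˣ, ∀ i, |∑ j, e j * a i j| ≤ θ * Fintype.card J := by
  classical
  let N : ℝ := Fintype.card J
  let S (e : J → ℤˣ) (i : I) : ℝ := ∑ j, e j * a i j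
  have hexp (e : J → ℤˣ) (i : I) :
      Real.exp (θ * |S e i|) ≤ Real.exp (θ * S e i) + Real.exp (-θ * S e i) := by
    simpa [abs_mul, abs_of_pos hθ] using Real.exp_abs_le (θ * S e i)
  have htotal : ∑ e : J → ℤˣ, ∑ i, Real.exp (θ * |S e i|) <
      ∑ _e : J → ℤˣ, Real.exp (θ ^ 2 * N) := by
    calc ∑ e : J → ℤˣ, ∑ i, Real.exp (θ * |S e i|)
        ≤ ∑ i, ∑ e : J → ℤˣ, (Real.exp (θ * S e i) + Real.exp (-θ * S e i)) := by
          rw [Finset.sum_comm]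
          gcongr with i _ e _
          exact hexp e i
      _ ≤ ∑ _i : I, 2 * (2 ^ Fintype.card J * Real.exp (θ ^ 2 * N / 2)) := by
          gcongr with i
          rw [Finset.sum_add_distrib, two_mul]
          gcongr
          · exact sum_exp_signs_le (ha i) θ
          · simpa using sum_exp_signs_le (ha i) (-θ)
      _ = 2 * Fintype.card I * (2 ^ Fintype.card J * Real.exp (θ ^ 2 * N / 2)) := by
          simp; ring
      _ < Real.exp (θ ^ 2 * N / 2) * (2 ^ Fintype.card J * Real.exp (θ ^ 2 * N / 2)) := by gcongr
      _ = ∑ _e : J → ℤˣ, Real.exp (θ ^ 2 * N) := by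
          rw [mul_left_comm, ← Real.exp_add, add_halves]
          simp
  obtain ⟨e, -, he⟩ := Finset.exists_lt_of_sum_lt htotal
  refine ⟨e, fun i => ?_⟩
  have hi : Real.exp (θ * |S e i|) < Real.exp (θ ^ 2 * N) :=
    (Finset.single_le_sum (f := fun i => Real.exp (θ * |S e i|))
      (fun _ _ => (Real.exp_pos _).le) (Finset.mem_univ i)).trans_lt he
  rw [Real.exp_lt_exp, sq, mul_assoc, mul_lt_mul_iff_right₀ hθ] at hi
  exact hi.le

theorem exists_signs_norm_average_le [Nonempty J] {θ : ℝ} (hθ : 0 < θ) (a : I → J → ℤˣ)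
    (hI : 2 * Fintype.card I < Real.exp (θ ^ 2 * Fintype.card J / 2)) :
    ∃ e : J → ℤˣ, ∀ i, ‖average fun j => ((e j * a i j : ℤˣ) : ℂ)‖ ≤ θ := by
  obtain ⟨e, he⟩ := exists_signs_abs_sum_le hθ (a := fun i j => (a i j : ℝ))
    (fun i j => by exact_mod_cast (Int.isUnit_iff_abs_eq.1 (a i j).isUnit).le) hI
  refine ⟨e, fun i => ?_⟩
  have hcard : (0 : ℝ) < Fintype.card J := by exact_mod_cast Fintype.card_pos
  have hcast : (∑ j, ((e j * a i j : ℤˣ) : ℂ)) = ((∑ j, e j * a i j : ℝ) : ℂ) := by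
    push_cast; rfl
  rw [average, norm_smul, norm_inv, RCLike.norm_natCast, inv_mul_le_iff₀ hcard, mul_comm, hcast,
    Complex.norm_real]
  exact he i

theorem exists_sign_pair_norm_average_le [Nonempty J] {θ : ℝ} (hθ : 0 < θ) (a : I → J → ℤˣ)
    (hI : 4 * Fintype.card I < Real.exp (θ ^ 2 * Fintype.card J / 2)) :
    ∃ e f : J → ℤˣ, ∀ i,
      ‖average fun j => ((e j * a i j : ℤˣ) : ℂ)‖ ≤ θ ∧
      ‖average fun j => ((f j * a i j : ℤˣ) : ℂ)‖ ≤ θ ∧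
      ‖average fun j => ((e j * f j * a i j : ℤˣ) : ℂ)‖ ≤ θ := by
  obtain ⟨e, he⟩ := exists_signs_norm_average_le hθ a
    (hI.trans_le' (by gcongr; norm_num))
  obtain ⟨f, hf⟩ := exists_signs_norm_average_le hθ (Sum.elim a fun i j => e j * a i j)
    (hI.trans_le' (by rw [Fintype.card_sum]; push_cast; linarith))
  refine ⟨e, f, fun i => ⟨he i, hf (.inl i), ?_⟩⟩
  simpa [mul_comm, mul_left_comm, mul_assoc] using hf (.inr i)

end RandomSigns

section Walsh

variable {n : ℕ}

/-- The character `g ↦ ∏ l, a l ^ g l` of the Boolean cube, indexed by the vector `a` of its values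
at the coordinate vectors. -/
def walsh (a : Fin n → ℤˣ) (g : Fin n → Bool) : ℤˣ :=
  ∏ l, if g l then a l else 1

theorem walsh_cons (x : ℤˣ) (a : Fin n → ℤˣ) (b : Bool) (g : Fin n → Bool) :
    walsh (Fin.cons x a : Fin (n + 1) → ℤˣ) (Fin.cons b g) = (if b then x else 1) * walsh a g := by
  simp [walsh, Fin.prod_univ_succ]

theorem walsh_mul_walsh_left (a b : Fin n → ℤˣ) (g : Fin n → Bool) :
    walsh a g * walsh b g = walsh (a * b) g := by
  simp only [walsh, ← Finset.prod_mul_distrib]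
  refine Finset.prod_congr rfl fun l _ => ?_
  cases g l <;> simp

theorem walsh_mul_walsh_right (a : Fin n → ℤˣ) (g h : Fin n → Bool) :
    walsh a g * walsh a h = walsh a fun l => g l ^^ h l := by
  simp only [walsh, ← Finset.prod_mul_distrib]
  refine Finset.prod_congr rfl fun l _ => ?_
  by_cases hg : g l <;> by_cases hh : h l <;> simp [hg, hh, Int.units_mul_self]

theorem sum_walsh (a : Fin n → ℤˣ) :
    ∑ g, (walsh a g : ℂ) = if a = 1 then (2 : ℂ) ^ n else 0 := by
  have hprod : ∑ g, (walsh a g : ℂ) = ∏ l, (1 + (a l : ℂ)) := by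
    calc ∑ g, (walsh a g : ℂ) = ∑ g : Fin n → Bool, ∏ l, if g l then (a l : ℂ) else 1 := by
          simp [walsh, Units.coe_prod, apply_ite]
      _ = ∏ l, ∑ b : Bool, if b = true then (a l : ℂ) else 1 :=
          (Fintype.prod_sum fun l (b : Bool) => if b then (a l : ℂ) else 1).symm
      _ = ∏ l, (1 + (a l : ℂ)) := by simp [add_comm]
  rw [hprod]
  split_ifs with ha
  · simp [ha, one_add_one_eq_two]
  · obtain ⟨l, hl⟩ := Function.ne_iff.1 ha
    have hneg : a l = -1 := (Int.units_eq_one_or _).resolve_left hl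
    exact Finset.prod_eq_zero (Finset.mem_univ l) (by simp [hneg])

theorem average_walsh_mul_walsh (a b : Fin n → ℤˣ) :
    average (fun g => ((walsh a g * walsh b g : ℤˣ) : ℂ)) = if a = b then 1 else 0 := by
  have hab : a * b = 1 ↔ a = b := by
    simp [funext_iff, mul_eq_one_iff_eq_inv, Int.units_inv_eq_self]
  simp [average, walsh_mul_walsh_left, sum_walsh, hab]

/-- The doubling step of Davie's construction: `walsh (twistedCons e j)`, for `j` ranging over
`Fin (n + 1) → ℤˣ`, is half of the characters of the `(n + 2)`-dimensional cube, and
`walsh (Fin.cons (e i) (Fin.cons (f i) i))` picks one character per `i` from the other half. -/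
def twistedCons (e : (Fin n → ℤˣ) → ℤˣ) (j : Fin (n + 1) → ℤˣ) : Fin (n + 2) → ℤˣ :=
  Fin.cons (-e (Fin.tail j)) j

theorem average_walsh_twistedCons (e : (Fin n → ℤˣ) → ℤˣ) (b c : Bool) (d : Fin n → Bool) :
    average (fun j => (walsh (twistedCons e j) (Fin.cons b (Fin.cons c d)) : ℂ)) =
      if c then 0 else average fun i => (((if b then -e i else 1) * walsh i d : ℤˣ) : ℂ) := by
  rw [average_cons, average_units_int]
  cases c
  · simp [twistedCons, walsh_cons, ← two_smul ℂ]
  · simp [twistedCons, walsh_cons, average_neg]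

theorem norm_average_walsh_sub_le {θ : ℝ} {e f : (Fin n → ℤˣ) → ℤˣ}
    (hef : ∀ d, ‖average fun i => ((e i * walsh i d : ℤˣ) : ℂ)‖ ≤ θ ∧
      ‖average fun i => ((f i * walsh i d : ℤˣ) : ℂ)‖ ≤ θ ∧
      ‖average fun i => ((e i * f i * walsh i d : ℤˣ) : ℂ)‖ ≤ θ)
    (b c : Bool) (d : Fin n → Bool) :
    ‖(average fun i : Fin n → ℤˣ =>
        (walsh (Fin.cons (e i) (Fin.cons (f i) i) : Fin (n + 2) → ℤˣ)
          (Fin.cons b (Fin.cons c d)) : ℂ)) -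
      average fun j => (walsh (twistedCons e j) (Fin.cons b (Fin.cons c d)) : ℂ)‖ ≤ 2 * θ := by
  obtain ⟨he, hf, hef⟩ := hef d
  rw [average_walsh_twistedCons]
  simp only [walsh_cons]
  have hθ : 0 ≤ θ := (norm_nonneg _).trans he
  push_cast at he hf hef ⊢
  cases b <;> cases c
  · simpa using hθ
  · simpa using hf.trans (by linarith)
  · simpa [average_neg, ← two_mul] using he
  · simpa [mul_assoc] using hef.trans (by linarith)

end Walsh

section DavieSystem

/-- The size `16 * (3 / 4) ^ k` of the averages over the `k`-th level of Davie's construction. It is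
summable, but large enough for random signs on `2 ^ k` points to satisfy order of `4 ^ k` bounds of
this size at once. -/
noncomputable def levelError (k : ℕ) : ℝ :=
  16 * (3 / 4) ^ k

theorem levelError_pos (k : ℕ) : 0 < levelError k := by
  unfold levelError
  positivity

theorem levelError_succ (k : ℕ) : levelError (k + 1) = 3 / 4 * levelError k := by
  unfold levelError
  ring

theorem exists_levelError_lt {ε : ℝ} (hε : 0 < ε) : ∃ k, levelError k < ε := by
  obtain ⟨k, hk⟩ := exists_pow_lt_of_lt_one (show 0 < ε / 16 by positivity)
    (show (3 / 4 : ℝ) < 1 by norm_num)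
  exact ⟨k, by rw [levelError]; linarith⟩

theorem four_mul_lt_exp_levelError {k : ℕ} {x : ℝ} (hx : x ≤ 32 * 4 ^ k) :
    4 * x < Real.exp (levelError k ^ 2 * Fintype.card (Fin k → ℤˣ) / 2) := by
  have hexponent :
      levelError k ^ 2 * Fintype.card (Fin k → ℤˣ) / 2 = 128 * (1 + 1 / 8 : ℝ) ^ k := by
    rw [show (1 + 1 / 8 : ℝ) = (3 / 4) ^ 2 * 2 by norm_num, mul_pow, ← pow_mul, mul_comm 2, pow_mul]
    simp [levelError]
    ring
  have hbernoulli : 1 + (k : ℝ) * (1 / 8) ≤ (1 + 1 / 8) ^ k :=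
    one_add_mul_le_pow (by norm_num) k
  calc 4 * x ≤ 128 * 4 ^ k := by linarith
    _ ≤ 128 * (16 + 1) ^ k := by gcongr; norm_num
    _ < (128 + 1) * (16 + 1) ^ k := by gcongr; norm_num
    _ ≤ Real.exp 128 * Real.exp 16 ^ k := by gcongr <;> exact Real.add_one_le_exp _
    _ = Real.exp (128 + k * 16) := by rw [Real.exp_add, Real.exp_nat_mul]
    _ ≤ Real.exp (levelError k ^ 2 * Fintype.card (Fin k → ℤˣ) / 2) := by
        rw [hexponent]
        gcongr
        linarith

/-- The sign arrays behind Davie's construction. On the block of `4 * 2 ^ k` points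
`Fin (k + 2) → Bool` there are two mutually orthogonal orthonormal systems, `y k` of size `2 ^ k`
and `u k` of size `2 ^ (k + 1)`, whose averaged reproducing kernels nearly agree. The two sign
vectors `η k b` glue `u k` to `y (k + 1)`, and they decorrelate `u k` from `y (k + 1)` as well as
two different gluings of `y (k + 1)` from each other. -/
structure DavieSystem where
  y (k : ℕ) : (Fin k → ℤˣ) → (Fin (k + 2) → Bool) → ℤˣ
  u (k : ℕ) : (Fin (k + 1) → ℤˣ) → (Fin (k + 2) → Bool) → ℤˣ
  η (k : ℕ) : Bool → (Fin (k + 1) → ℤˣ) → ℤˣ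
  average_y_mul_y (k : ℕ) (i j : Fin k → ℤˣ) :
    average (fun g => ((y k i g * y k j g : ℤˣ) : ℂ)) = if i = j then 1 else 0
  average_u_mul_u (k : ℕ) (i j : Fin (k + 1) → ℤˣ) :
    average (fun g => ((u k i g * u k j g : ℤˣ) : ℂ)) = if i = j then 1 else 0
  average_y_mul_u (k : ℕ) (i : Fin k → ℤˣ) (j : Fin (k + 1) → ℤˣ) :
    average (fun g => ((y k i g * u k j g : ℤˣ) : ℂ)) = 0
  norm_kernel_sub_le (k : ℕ) (g h : Fin (k + 2) → Bool) :
    ‖average (fun i => ((y k i g * y k i h : ℤˣ) : ℂ)) -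
      average fun j => ((u k j g * u k j h : ℤˣ) : ℂ)‖ ≤ 2 * levelError k
  norm_average_η_mul_le (k : ℕ) (b : Bool) (g : Fin (k + 2) → Bool) (h : Fin (k + 3) → Bool) :
    ‖average fun j => ((η k b j * (u k j g * y (k + 1) j h) : ℤˣ) : ℂ)‖ ≤ levelError (k + 1)
  norm_average_η_mul_η_le (k : ℕ) {b c : Bool} (hbc : b ≠ c) (g h : Fin (k + 3) → Bool) :
    ‖average fun j => ((η k b j * η k c j * (y (k + 1) j g * y (k + 1) j h) : ℤˣ) : ℂ)‖ ≤
      levelError (k + 1)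

theorem exists_walsh_level (k : ℕ) :
    ∃ (y : (Fin k → ℤˣ) → (Fin (k + 2) → Bool) → ℤˣ)
      (u : (Fin (k + 1) → ℤˣ) → (Fin (k + 2) → Bool) → ℤˣ),
      (∀ i j, average (fun g => ((y i g * y j g : ℤˣ) : ℂ)) = if i = j then 1 else 0) ∧
      (∀ i j, average (fun g => ((u i g * u j g : ℤˣ) : ℂ)) = if i = j then 1 else 0) ∧
      (∀ i j, average (fun g => ((y i g * u j g : ℤˣ) : ℂ)) = 0) ∧
      ∀ g h, ‖average (fun i => ((y i g * y i h : ℤˣ) : ℂ)) -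
        average fun j => ((u j g * u j h : ℤˣ) : ℂ)‖ ≤ 2 * levelError k := by
  obtain ⟨e, f, hef⟩ := exists_sign_pair_norm_average_le (levelError_pos k)
    (fun (d : Fin k → Bool) i => walsh i d) <| four_mul_lt_exp_levelError <| by
      calc (Fintype.card (Fin k → Bool) : ℝ) = 2 ^ k := by simp
        _ ≤ 4 ^ k := by gcongr; norm_num
        _ ≤ 32 * 4 ^ k := le_mul_of_one_le_left (by positivity) (by norm_num)
  have hyinj : Function.Injective fun i => (Fin.cons (e i) (Fin.cons (f i) i) : Fin (k + 2) → ℤˣ) :=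
    fun i j hij => (Fin.cons_inj.1 (Fin.cons_inj.1 hij).2).2
  have huinj : Function.Injective (twistedCons e) := fun i j hij => (Fin.cons_inj.1 hij).2
  refine ⟨fun i => walsh (Fin.cons (e i) (Fin.cons (f i) i)), fun j => walsh (twistedCons e j),
    fun i j => ?_, fun i j => ?_, fun i j => ?_, fun g h => ?_⟩
  · exact (average_walsh_mul_walsh _ _).trans (if_congr hyinj.eq_iff rfl rfl)
  · exact (average_walsh_mul_walsh _ _).trans (if_congr huinj.eq_iff rfl rfl)
  · rw [average_walsh_mul_walsh, if_neg]
    simp only [twistedCons, Fin.cons_inj, not_and]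
    rintro hsign rfl
    simp at hsign
  · simp only [walsh_mul_walsh_right]
    rw [← Fin.cons_self_tail fun l => g l ^^ h l, ← Fin.cons_self_tail (Fin.tail _)]
    exact norm_average_walsh_sub_le hef _ _ _

theorem nonempty_davieSystem : Nonempty DavieSystem := by
  choose y u hyy huu hyu hkernel using exists_walsh_level
  have hη (k : ℕ) := exists_sign_pair_norm_average_le (levelError_pos (k + 1))
    (Sum.elim
      (fun (p : (Fin (k + 2) → Bool) × (Fin (k + 3) → Bool)) j => u k j p.1 * y (k + 1) j p.2)
      (fun (p : (Fin (k + 3) → Bool) × (Fin (k + 3) → Bool)) j =>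
        y (k + 1) j p.1 * y (k + 1) j p.2))
    (four_mul_lt_exp_levelError <| by
      rw [show (4 : ℝ) = 2 * 2 by norm_num, mul_pow]
      simp only [Fintype.card_sum, Fintype.card_prod, Fintype.card_fun, Fintype.card_bool,
        Fintype.card_fin, pow_succ]
      push_cast
      linarith [show (0 : ℝ) ≤ 2 ^ k * 2 ^ k by positivity])
  choose e f hef using hη
  exact ⟨{
    y, u
    η := fun k b => if b then e k else f k
    average_y_mul_y := hyy
    average_u_mul_u := huu
    average_y_mul_u := hyu
    norm_kernel_sub_le := hkernel
    norm_average_η_mul_le := fun k b g h => by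
      cases b
      · exact (hef k (.inl (g, h))).2.1
      · exact (hef k (.inl (g, h))).1
    norm_average_η_mul_η_le := fun k b c hbc g h => by
      have := (hef k (.inr (g, h))).2.2
      cases b <;> cases c <;> simp_all [mul_comm] }⟩

end DavieSystem

section ClosedSpan

variable {ι E F : Type*} [NormedAddCommGroup E] [NormedSpace ℂ E]
  [NormedAddCommGroup F] [NormedSpace ℂ F]

/-- The closed linear span of a family of vectors. -/
abbrev closedSpan (v : ι → E) : Submodule ℂ E :=
  (Submodule.span ℂ (Set.range v)).topologicalClosure

theorem mem_closedSpan (v : ι → E) (i : ι) : v i ∈ closedSpan v :=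
  Submodule.le_topologicalClosure _ (Submodule.subset_span (Set.mem_range_self i))

instance separableSpace_closedSpan [Countable ι] (v : ι → E) :
    TopologicalSpace.SeparableSpace (closedSpan v) :=
  ((Set.countable_range v).isSeparable.span (R := ℂ)).closure.separableSpace

theorem closedSpan_hom_ext {v : ι → E} {f g : closedSpan v →L[ℂ] F}
    (hfg : ∀ i, f ⟨v i, mem_closedSpan v i⟩ = g ⟨v i, mem_closedSpan v i⟩) : f = g := by
  let agree : Submodule ℂ E :=
    (LinearMap.eqLocus f.toLinearMap g.toLinearMap).map (closedSpan v).subtype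
  have hspan : Submodule.span ℂ (Set.range v) ≤ agree := by
    rw [Submodule.span_le]
    rintro _ ⟨i, rfl⟩
    exact ⟨⟨v i, mem_closedSpan v i⟩, hfg i, rfl⟩
  have hclosed : IsClosed (agree : Set E) :=
    (Submodule.isClosed_topologicalClosure _).isClosedEmbedding_subtypeVal.isClosedMap _
      (isClosed_eq f.continuous g.continuous)
  ext x
  obtain ⟨y, hy, hyx⟩ := Submodule.topologicalClosure_minimal _ hspan hclosed x.2
  rwa [← Subtype.ext hyx]

end ClosedSpan

theorem average_units_mul {ι : Type*} [Fintype ι] (x : ℤˣ) (f : ι → ℤˣ) :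
    average (fun i => ((x * f i : ℤˣ) : ℂ)) = x * average fun i => (f i : ℂ) := by
  simpa using average_smul (x : ℂ) fun i => (f i : ℂ)

theorem norm_units_int_cast (x : ℤˣ) : ‖(x : ℂ)‖ = 1 := by
  rcases Int.units_eq_one_or x with rfl | rfl <;> simp

open scoped BoundedContinuousFunction

/-- The disjoint union of the blocks `Fin (k + 2) → Bool`, on which Davie's spaces live. -/
abbrev DaviePoint : Type :=
  Σ k : ℕ, Fin (k + 2) → Bool

namespace DavieSystem

variable (D : DavieSystem) (s : ℕ → Bool)

/-- The generator with index `j : Fin (k + 1) → ℤˣ` of level `k` of the Davie space of the branch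
`s`, as a function on points: it is `u k j` on block `k` and `η k (s k) j • y (k + 1) j` on block
`k + 1`. -/
noncomputable def generatorFun (k : ℕ) (j : Fin (k + 1) → ℤˣ) (x : DaviePoint) : ℂ :=
  (Pi.single k (fun g => (D.u k j g : ℂ)) +
    Pi.single (k + 1) (fun g => ((D.η k (s k) j * D.y (k + 1) j g : ℤˣ) : ℂ)) :
      (m : ℕ) → (Fin (m + 2) → Bool) → ℂ) x.1 x.2

variable {k : ℕ} (j : Fin (k + 1) → ℤˣ)

@[simp]
theorem generatorFun_apply_same (g : Fin (k + 2) → Bool) :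
    D.generatorFun s k j ⟨k, g⟩ = D.u k j g := by
  simp [generatorFun]

@[simp]
theorem generatorFun_apply_succ (g : Fin (k + 3) → Bool) :
    D.generatorFun s k j ⟨k + 1, g⟩ = ((D.η k (s k) j * D.y (k + 1) j g : ℤˣ) : ℂ) := by
  simp [generatorFun]

theorem generatorFun_apply_of_ne {m : ℕ} (hm : m ≠ k) (hm' : m ≠ k + 1)
    (g : Fin (m + 2) → Bool) : D.generatorFun s k j ⟨m, g⟩ = 0 := by
  simp [generatorFun, hm, hm']

theorem norm_generatorFun_le (x : DaviePoint) : ‖D.generatorFun s k j x‖ ≤ 1 := by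
  obtain ⟨m, g⟩ := x
  rcases eq_or_ne m k with rfl | hm
  · rw [generatorFun_apply_same, norm_units_int_cast]
  rcases eq_or_ne m (k + 1) with rfl | hm'
  · rw [generatorFun_apply_succ, norm_units_int_cast]
  · simp [D.generatorFun_apply_of_ne s j hm hm']

/-- `generatorFun` as a bounded function. -/
noncomputable def boundedGenerator (p : Σ k : ℕ, Fin (k + 1) → ℤˣ) : DaviePoint →ᵇ ℂ :=
  .ofNormedAddCommGroupDiscrete (D.generatorFun s p.1 p.2) 1 (D.norm_generatorFun_le s p.2)

/-- The Davie space of the branch `s`. -/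
def Space : Type :=
  closedSpan (D.boundedGenerator s)

noncomputable instance : NormedAddCommGroup (D.Space s) :=
  inferInstanceAs (NormedAddCommGroup (closedSpan (D.boundedGenerator s)))

noncomputable instance : NormedSpace ℂ (D.Space s) :=
  inferInstanceAs (NormedSpace ℂ (closedSpan (D.boundedGenerator s)))

instance : CompleteSpace (D.Space s) :=
  inferInstanceAs (CompleteSpace (closedSpan (D.boundedGenerator s)))

instance : TopologicalSpace.SeparableSpace (D.Space s) :=
  inferInstanceAs (TopologicalSpace.SeparableSpace (closedSpan (D.boundedGenerator s)))

/-- The generators of the Davie space, as its elements. -/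
noncomputable def generator (k : ℕ) (j : Fin (k + 1) → ℤˣ) : D.Space s :=
  (⟨D.boundedGenerator s ⟨k, j⟩, mem_closedSpan _ _⟩ : closedSpan (D.boundedGenerator s))

/-- Evaluation at a point, as a functional on the Davie space. -/
noncomputable def evalFunctional (x : DaviePoint) : StrongDual ℂ (D.Space s) :=
  (BoundedContinuousFunction.evalCLM ℂ x).domRestrict (closedSpan (D.boundedGenerator s))

/-- The closed span of the evaluations, a separable substitute for the dual of the Davie space. -/
def EvalSpace : Type :=
  closedSpan (D.evalFunctional s)

noncomputable instance : NormedAddCommGroup (D.EvalSpace s) :=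
  inferInstanceAs (NormedAddCommGroup (closedSpan (D.evalFunctional s)))

noncomputable instance : NormedSpace ℂ (D.EvalSpace s) :=
  inferInstanceAs (NormedSpace ℂ (closedSpan (D.evalFunctional s)))

instance : CompleteSpace (D.EvalSpace s) :=
  inferInstanceAs (CompleteSpace (closedSpan (D.evalFunctional s)))

instance : TopologicalSpace.SeparableSpace (D.EvalSpace s) :=
  inferInstanceAs (TopologicalSpace.SeparableSpace (closedSpan (D.evalFunctional s)))

/-- The duality pairing between `EvalSpace` and the Davie space. -/
noncomputable def pairing : D.EvalSpace s →L[ℂ] StrongDual ℂ (D.Space s) :=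
  (closedSpan (D.evalFunctional s)).subtypeL

/-- Evaluation at a point, as an element of `EvalSpace`. -/
noncomputable def eval (x : DaviePoint) : D.EvalSpace s :=
  (⟨D.evalFunctional s x, mem_closedSpan _ _⟩ : closedSpan (D.evalFunctional s))

theorem norm_pairing_le : ‖D.pairing s‖ ≤ 1 :=
  Submodule.norm_subtypeL_le _

variable {s}

theorem norm_le_of_forall_eval {C : ℝ} (hC : 0 ≤ C) {f : D.Space s}
    (hf : ∀ x, ‖D.pairing s (D.eval s x) f‖ ≤ C) : ‖f‖ ≤ C :=
  (BoundedContinuousFunction.norm_le hC).2 hf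

theorem evalSpace_ext {φ ψ : D.EvalSpace s}
    (h : ∀ k j, D.pairing s φ (D.generator s k j) = D.pairing s ψ (D.generator s k j)) : φ = ψ :=
  Subtype.ext <| closedSpan_hom_ext fun p => h p.1 p.2

variable (s)

theorem norm_eval_le (x : DaviePoint) : ‖D.eval s x‖ ≤ 1 :=
  ContinuousLinearMap.opNorm_le_bound _ zero_le_one fun _ =>
    (BoundedContinuousFunction.norm_coe_le_norm _ x).trans_eq (one_mul _).symm

@[simp]
theorem pairing_eval_generator (x : DaviePoint) :
    D.pairing s (D.eval s x) (D.generator s k j) = D.generatorFun s k j x :=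
  rfl

theorem pairing_average_eval_generator {ι : Type*} [Fintype ι] (w : ι → ℂ) (x : ι → DaviePoint) :
    D.pairing s (average fun i => w i • D.eval s (x i)) (D.generator s k j) =
      average fun i => w i * D.generatorFun s k j (x i) := by
  rw [map_average]
  refine (map_average (ContinuousLinearMap.apply ℂ ℂ (D.generator s k j)) _).trans ?_
  simp

/-- The functional biorthogonal to `generator s k j`. It can be computed on block `k` (as here) or
on block `k + 1` (see `coefficient_eq`), which is what makes averages over consecutive levels
comparable. -/
noncomputable def coefficient (k : ℕ) (j : Fin (k + 1) → ℤˣ) : D.EvalSpace s :=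
  average fun g => (D.u k j g : ℂ) • D.eval s ⟨k, g⟩

theorem pairing_coefficient_generator (i : Fin (k + 1) → ℤˣ) :
    D.pairing s (D.coefficient s k j) (D.generator s k i) = if j = i then 1 else 0 := by
  simp only [coefficient, pairing_average_eval_generator, generatorFun_apply_same]
  exact_mod_cast D.average_u_mul_u k j i

theorem norm_coefficient_le : ‖D.coefficient s k j‖ ≤ 1 :=
  norm_average_le fun g => by
    rw [norm_smul, norm_units_int_cast, one_mul]
    exact D.norm_eval_le s ⟨k, g⟩

theorem pairing_coefficient_generator_of_ne {m : ℕ} (hm : k ≠ m) (i : Fin (m + 1) → ℤˣ) :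
    D.pairing s (D.coefficient s k j) (D.generator s m i) = 0 := by
  rw [coefficient, pairing_average_eval_generator]
  rcases eq_or_ne k (m + 1) with rfl | hm'
  · have hcomm (g : Fin (m + 3) → Bool) :
        D.u (m + 1) j g * (D.η m (s m) i * D.y (m + 1) i g) =
          D.η m (s m) i * (D.y (m + 1) i g * D.u (m + 1) j g) := by
      rw [mul_left_comm, mul_comm (D.u (m + 1) j g)]
    simp only [generatorFun_apply_succ, ← Int.cast_mul, ← Units.val_mul, hcomm,
      average_units_mul, D.average_y_mul_u, mul_zero]
  · simp [D.generatorFun_apply_of_ne s i hm hm', average_const]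

theorem coefficient_eq :
    D.coefficient s k j = average fun g =>
      ((D.η k (s k) j * D.y (k + 1) j g : ℤˣ) : ℂ) • D.eval s ⟨k + 1, g⟩ := by
  refine D.evalSpace_ext fun m i => ?_
  rw [pairing_average_eval_generator]
  rcases eq_or_ne k m with rfl | hm
  · have hcomm (g : Fin (k + 3) → Bool) :
        D.η k (s k) j * D.y (k + 1) j g * (D.η k (s k) i * D.y (k + 1) i g) =
          D.η k (s k) j * D.η k (s k) i * (D.y (k + 1) j g * D.y (k + 1) i g) :=
      mul_mul_mul_comm _ _ _ _
    simp only [pairing_coefficient_generator, generatorFun_apply_succ, ← Int.cast_mul,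
      ← Units.val_mul, hcomm, average_units_mul, D.average_y_mul_y]
    split_ifs with hij
    · simp [hij, Int.units_mul_self]
    · simp
  rw [D.pairing_coefficient_generator_of_ne s j hm]
  rcases eq_or_ne (k + 1) m with rfl | hm'
  · simp only [generatorFun_apply_same, ← Int.cast_mul, ← Units.val_mul, mul_assoc,
      average_units_mul, D.average_y_mul_u, mul_zero]
  · simp [D.generatorFun_apply_of_ne s i hm' (by simpa using hm), average_const]

end DavieSystem

namespace DavieSystem

variable (D : DavieSystem) (s t : ℕ → Bool) {k : ℕ}

theorem eval_average_generator (w : (Fin (k + 1) → ℤˣ) → ℂ) (x : DaviePoint) :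
    D.pairing s (D.eval s x) (average fun j => w j • D.generator s k j) =
      average fun j => w j * D.generatorFun s k j x := by
  simp [map_average]

/-- The average of the generators of level `k` against the sign vector `u k · g`. -/
noncomputable def uAverage (k : ℕ) (g : Fin (k + 2) → Bool) : D.Space s :=
  average fun j => (D.u k j g : ℂ) • D.generator s k j

/-- The average of the generators of level `k` against the sign vector `y (k + 1) · g`, glued with
the choice `b`. -/
noncomputable def yAverage (k : ℕ) (b : Bool) (g : Fin (k + 3) → Bool) : D.Space s :=
  average fun j => ((D.η k b j * D.y (k + 1) j g : ℤˣ) : ℂ) • D.generator s k j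

theorem norm_eval_yAverage_le (b : Bool) (g : Fin (k + 3) → Bool) (h : Fin (k + 2) → Bool) :
    ‖D.pairing s (D.eval s ⟨k, h⟩) (D.yAverage s k b g)‖ ≤ levelError (k + 1) := by
  have hcomm (j : Fin (k + 1) → ℤˣ) : D.η k b j * D.y (k + 1) j g * D.u k j h =
      D.η k b j * (D.u k j h * D.y (k + 1) j g) := by
    rw [mul_assoc, mul_comm (D.y (k + 1) j g)]
  simpa only [yAverage, eval_average_generator, generatorFun_apply_same, ← Int.cast_mul,
    ← Units.val_mul, hcomm] using D.norm_average_η_mul_le k b h g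

variable {s} in
theorem norm_yAverage_le {b : Bool} (hb : b ≠ s k) (g : Fin (k + 3) → Bool) :
    ‖D.yAverage s k b g‖ ≤ levelError (k + 1) := by
  have hpos := (levelError_pos (k + 1)).le
  refine D.norm_le_of_forall_eval hpos fun ⟨m, h⟩ => ?_
  rcases eq_or_ne m k with rfl | hm
  · exact D.norm_eval_yAverage_le s b g h
  rw [yAverage, eval_average_generator]
  rcases eq_or_ne m (k + 1) with rfl | hm'
  · simpa only [generatorFun_apply_succ, ← Int.cast_mul, ← Units.val_mul, mul_mul_mul_comm]
      using D.norm_average_η_mul_η_le k hb g h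
  · simpa [D.generatorFun_apply_of_ne s _ hm hm', average_const] using hpos

theorem norm_uAverage_succ_sub_yAverage_le (g : Fin (k + 3) → Bool) :
    ‖D.uAverage s (k + 1) g - D.yAverage s k (s k) g‖ ≤ 2 * levelError (k + 1) := by
  have hpos := levelError_pos (k + 1)
  refine D.norm_le_of_forall_eval (by positivity) fun ⟨m, h⟩ => ?_
  rw [map_sub, uAverage, eval_average_generator]
  rcases eq_or_ne m k with rfl | hm
  · simp only [D.generatorFun_apply_of_ne s _ (show m ≠ m + 1 by simp)
      (show m ≠ m + 1 + 1 by simp [add_assoc]), mul_zero, average_const, zero_sub, norm_neg]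
    exact (D.norm_eval_yAverage_le s _ g h).trans (by linarith)
  rw [yAverage, eval_average_generator]
  rcases eq_or_ne m (k + 1) with rfl | hm'
  · have hη (j : Fin (k + 1) → ℤˣ) :
        D.η k (s k) j * D.y (k + 1) j g * (D.η k (s k) j * D.y (k + 1) j h) =
          D.y (k + 1) j g * D.y (k + 1) j h := by
      rw [mul_mul_mul_comm, Int.units_mul_self, one_mul]
    simpa only [generatorFun_apply_same, generatorFun_apply_succ, ← Int.cast_mul, ← Units.val_mul,
      hη, norm_sub_rev] using D.norm_kernel_sub_le (k + 1) g h
  simp only [D.generatorFun_apply_of_ne s _ hm hm', mul_zero, average_const, sub_zero]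
  rcases eq_or_ne m (k + 1 + 1) with rfl | hm''
  · simp only [generatorFun_apply_succ, ← Int.cast_mul, ← Units.val_mul,
      mul_left_comm (D.u (k + 1) _ g)]
    exact (D.norm_average_η_mul_le (k + 1) _ g h).trans (by rw [levelError_succ]; linarith)
  · simpa [D.generatorFun_apply_of_ne s _ hm' hm'', average_const] using hpos.le

/-- The average over level `k` of the pairings, by a bilinear map, of the generators for the branch
`s` with the biorthogonal functionals for the branch `t`. -/
noncomputable def mixedTrace {Z : Type*} [AddCommGroup Z] [Module ℂ Z] (k : ℕ)
    (T : D.Space s →ₗ[ℂ] D.EvalSpace t →ₗ[ℂ] Z) : Z :=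
  average fun j => T (D.generator s k j) (D.coefficient t k j)

section

variable {Z : Type*} [AddCommGroup Z] [Module ℂ Z] (T : D.Space s →ₗ[ℂ] D.EvalSpace t →ₗ[ℂ] Z)

theorem mixedTrace_eq_average_uAverage :
    D.mixedTrace s t k T = average fun g => T (D.uAverage s k g) (D.eval t ⟨k, g⟩) :=
  average_bilin_swap T _ _ _

theorem mixedTrace_eq_average_yAverage :
    D.mixedTrace s t k T =
      average fun g => T (D.yAverage s k (t k) g) (D.eval t ⟨k + 1, g⟩) := by
  simp only [mixedTrace, coefficient_eq]
  exact average_bilin_swap T _ _ _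

end

section

variable {D s t}
variable {Z : Type*} [NormedAddCommGroup Z] [NormedSpace ℂ Z]
  {T : D.Space s →ₗ[ℂ] D.EvalSpace t →ₗ[ℂ] Z} {C : ℝ}

theorem norm_average_bilin_eval_le (hC : 0 ≤ C) (hT : ∀ x y, ‖T x y‖ ≤ C * ‖x‖ * ‖y‖)
    {ι : Type*} [Fintype ι] [Nonempty ι] {f : ι → D.Space s} {ε : ℝ} (hf : ∀ i, ‖f i‖ ≤ ε)
    (x : ι → DaviePoint) : ‖average fun i => T (f i) (D.eval t (x i))‖ ≤ C * ε :=
  norm_average_le fun i =>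
    calc ‖T (f i) (D.eval t (x i))‖ ≤ C * ‖f i‖ * ‖D.eval t (x i)‖ := hT _ _
      _ ≤ C * ‖f i‖ * 1 := by gcongr; exact D.norm_eval_le t _
      _ ≤ C * ε := by rw [mul_one]; gcongr; exact hf i

theorem norm_mixedTrace_le_of_ne (hC : 0 ≤ C) (hT : ∀ x y, ‖T x y‖ ≤ C * ‖x‖ * ‖y‖)
    (hk : s k ≠ t k) : ‖D.mixedTrace s t k T‖ ≤ C * levelError (k + 1) := by
  rw [mixedTrace_eq_average_yAverage]
  exact norm_average_bilin_eval_le hC hT (fun g => D.norm_yAverage_le hk.symm g) _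

theorem norm_mixedTrace_succ_sub_le (hC : 0 ≤ C) (hT : ∀ x y, ‖T x y‖ ≤ C * ‖x‖ * ‖y‖)
    (hk : s k = t k) :
    ‖D.mixedTrace s t (k + 1) T - D.mixedTrace s t k T‖ ≤ C * (2 * levelError (k + 1)) := by
  rw [mixedTrace_eq_average_uAverage, mixedTrace_eq_average_yAverage, ← average_sub, ← hk]
  simp only [← LinearMap.sub_apply, ← map_sub]
  exact norm_average_bilin_eval_le hC hT (fun g => D.norm_uAverage_succ_sub_yAverage_le s g) _

theorem norm_mixedTrace_le (hC : 0 ≤ C) (hT : ∀ x y, ‖T x y‖ ≤ C * ‖x‖ * ‖y‖) {k m : ℕ}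
    (hkm : k ≤ m) (hm : s m ≠ t m) :
    ‖D.mixedTrace s t k T‖ ≤ C * (8 * levelError (k + 1)) := by
  have hne {k : ℕ} (hk : s k ≠ t k) : ‖D.mixedTrace s t k T‖ ≤ C * (8 * levelError (k + 1)) := by
    refine (norm_mixedTrace_le_of_ne hC hT hk).trans ?_
    gcongr
    linarith [levelError_pos (k + 1)]
  induction hkm using Nat.decreasingInduction with
  | self => exact hne hm
  | of_succ k _ ih =>
    by_cases hk : s k = t k
    · calc ‖D.mixedTrace s t k T‖
          ≤ ‖D.mixedTrace s t (k + 1) T‖ + ‖D.mixedTrace s t (k + 1) T - D.mixedTrace s t k T‖ :=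
            norm_le_norm_add_norm_sub _ _
        _ ≤ C * (8 * levelError (k + 1 + 1)) + C * (2 * levelError (k + 1)) :=
            add_le_add ih (norm_mixedTrace_succ_sub_le hC hT hk)
        _ = C * (8 * levelError (k + 1)) := by
            rw [levelError_succ (k + 1)]
            ring
    · exact hne hk

end

end DavieSystem

section PairingRing

variable {X Y : Type*} [NormedAddCommGroup X] [NormedSpace ℂ X]
  [NormedAddCommGroup Y] [NormedSpace ℂ Y] (p : Y →L[ℂ] StrongDual ℂ X)

/-- The symmetrization of the pairing `p`, as a bilinear form on `X × Y × ℂ` that ignores the third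
coordinate. -/
noncomputable def symmPairing : X × Y × ℂ →L[ℂ] X × Y × ℂ →L[ℂ] ℂ :=
  let q : X × Y × ℂ →L[ℂ] X × Y × ℂ →L[ℂ] ℂ :=
    p.bilinearComp ((ContinuousLinearMap.fst ℂ Y ℂ).comp (.snd ℂ X (Y × ℂ))) (.fst ℂ X (Y × ℂ))
  (2⁻¹ : ℂ) • (q.flip + q)

theorem symmPairing_apply (a b : X × Y × ℂ) :
    symmPairing p a b = 2⁻¹ * (p b.2.1 a.1 + p a.2.1 b.1) :=
  rfl

theorem symmPairing_comm (a b : X × Y × ℂ) : symmPairing p a b = symmPairing p b a := by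
  rw [symmPairing_apply, symmPairing_apply, add_comm]

theorem norm_symmPairing_apply_le (a b : X × Y × ℂ) :
    ‖symmPairing p a b‖ ≤ ‖p‖ * ‖a‖ * ‖b‖ := by
  have hfst (c : X × Y × ℂ) : ‖c.1‖ ≤ ‖c‖ := norm_fst_le c
  have hsnd (c : X × Y × ℂ) : ‖c.2.1‖ ≤ ‖c‖ := (norm_fst_le c.2).trans (norm_snd_le c)
  have hab := p.le_of_opNorm₂_le_of_le le_rfl (hsnd b) (hfst a)
  have hba := p.le_of_opNorm₂_le_of_le le_rfl (hsnd a) (hfst b)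
  rw [symmPairing_apply, norm_mul, norm_inv, RCLike.norm_ofNat, inv_mul_le_iff₀ two_pos]
  linarith [norm_add_le (p b.2.1 a.1) (p a.2.1 b.1)]

variable {p}

/-- The product `a * b = (0, 0, symmPairing p a b)` on `X × Y × ℂ`, for which all triple products
vanish. -/
noncomputable abbrev pairingRing (hp : ‖p‖ ≤ 1) : NonUnitalNormedCommRing (X × Y × ℂ) :=
  { (inferInstance : NormedAddCommGroup (X × Y × ℂ)) with
    mul := fun a b => (0, 0, symmPairing p a b)
    left_distrib := fun a b c => by
      change ((0, 0, symmPairing p a (b + c)) : X × Y × ℂ) =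
        (0, 0, symmPairing p a b) + (0, 0, symmPairing p a c)
      simp
    right_distrib := fun a b c => by
      change ((0, 0, symmPairing p (a + b) c) : X × Y × ℂ) =
        (0, 0, symmPairing p a c) + (0, 0, symmPairing p b c)
      simp
    zero_mul := fun a => by
      change ((0, 0, symmPairing p 0 a) : X × Y × ℂ) = 0
      simp
    mul_zero := fun a => by
      change ((0, 0, symmPairing p a 0) : X × Y × ℂ) = 0
      simp
    mul_assoc := fun a b c => by
      change ((0, 0, symmPairing p (0, 0, symmPairing p a b) c) : X × Y × ℂ) =
        (0, 0, symmPairing p a (0, 0, symmPairing p b c))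
      simp [symmPairing_apply]
    mul_comm := fun a b => by
      change ((0, 0, symmPairing p a b) : X × Y × ℂ) = (0, 0, symmPairing p b a)
      rw [symmPairing_comm]
    norm_mul_le := fun a b => by
      change ‖((0, 0, symmPairing p a b) : X × Y × ℂ)‖ ≤ ‖a‖ * ‖b‖
      simp only [Prod.norm_mk, norm_zero, norm_nonneg, sup_of_le_right]
      refine (norm_symmPairing_apply_le p a b).trans ?_
      gcongr
      exact mul_le_of_le_one_left (norm_nonneg a) hp }

end PairingRing

section PairingAlgebra

variable {X Y : Type} [NormedAddCommGroup X] [NormedSpace ℂ X] [CompleteSpace X]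
  [TopologicalSpace.SeparableSpace X] [NormedAddCommGroup Y] [NormedSpace ℂ Y] [CompleteSpace Y]
  [TopologicalSpace.SeparableSpace Y] {p : Y →L[ℂ] StrongDual ℂ X}

/-- `X × Y × ℂ` with the product `pairingRing`, as a separable commutative Banach algebra. -/
noncomputable def pairingAlgebra (hp : ‖p‖ ≤ 1) : SepCommBanachAlgebra :=
  letI := pairingRing hp
  { carrier := X × Y × ℂ
    tower := ⟨fun r a b => by
      change ((0, 0, symmPairing p (r • a) b) : X × Y × ℂ) = r • (0, 0, symmPairing p a b)
      simp⟩
    smulComm := ⟨fun r a b => by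
      change r • ((0, 0, symmPairing p a b) : X × Y × ℂ) = (0, 0, symmPairing p a (r • b))
      simp⟩ }

theorem exists_mul_eq_pairing_smul {hp : ‖p‖ ≤ 1} {B : Type*} [NonUnitalNormedRing B]
    [NormedSpace ℂ B] {φ : (pairingAlgebra hp).carrier →ₙₐ[ℂ] B} (hφ : Function.Injective φ)
    (hcont : Continuous φ) :
    ∃ (P : X →L[ℂ] B) (Q : Y →L[ℂ] B) (z : B), z ≠ 0 ∧ ∀ x y, P x * Q y = p y x • z := by
  let Φ : X × Y × ℂ →L[ℂ] B :=
    { toFun := φ, map_add' := map_add φ, map_smul' := map_smul φ, cont := hcont }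
  have hmul (a b : X × Y × ℂ) : Φ a * Φ b = Φ (0, 0, symmPairing p a b) :=
    (φ.map_mul' a b).symm
  refine ⟨Φ.comp (.inl ℂ X (Y × ℂ)),
    Φ.comp ((ContinuousLinearMap.inr ℂ X (Y × ℂ)).comp (.inl ℂ Y ℂ)), Φ (0, 0, 2⁻¹),
    fun hz => ?_, fun x y => ?_⟩
  · have hzero : ((0, 0, 2⁻¹) : X × Y × ℂ) = 0 := hφ (hz.trans Φ.map_zero.symm)
    simp at hzero
  · rw [← map_smul]
    refine (hmul _ _).trans ?_
    simp [symmPairing_apply, mul_comm]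

end PairingAlgebra

section Pigeonhole

variable {ι κ α M : Type*} [Uncountable ι] [PseudoMetricSpace M]
  [TopologicalSpace.SeparableSpace M]

theorem exists_uncountable_preimage_singleton [Countable κ] (f : ι → κ) :
    ∃ k, Uncountable (f ⁻¹' {k}) := by
  by_contra! hfiber
  have (k : κ) : Countable {i // f i = k} := hfiber k
  exact not_countable ((Equiv.sigmaFiberEquiv f).countable_iff.1 inferInstance)

theorem exists_uncountable_setOf_le (r : ι → ℝ) :
    ∃ C, 0 < C ∧ Uncountable {i | r i ≤ C} := by
  choose N hN using fun i => exists_nat_ge (r i)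
  obtain ⟨n, hn⟩ := exists_uncountable_preimage_singleton N
  refine ⟨n + 1, by positivity, ?_⟩
  have hsub : N ⁻¹' {n} ⊆ {i | r i ≤ n + 1} := by
    rintro i rfl
    exact (hN i).trans (lt_add_one _).le
  exact (Set.inclusion_injective hsub).uncountable

theorem exists_ne_dist_lt (F : ι → M) {ε : ℝ} (hε : 0 < ε) :
    ∃ i j, i ≠ j ∧ dist (F i) (F j) < ε := by
  by_contra! hfar
  have hdisjoint : Pairwise (Function.onFun Disjoint fun i => Metric.ball (F i) (ε / 2)) :=
    fun i j hij => Metric.ball_disjoint_ball (by simpa using hfar i j hij)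
  exact not_countable (hdisjoint.countable_of_isOpen_disjoint (fun _ => Metric.isOpen_ball)
    fun i => ⟨F i, Metric.mem_ball_self (half_pos hε)⟩)

theorem exists_apply_ne_dist_lt [Countable α] {s : ι → ℕ → α} (hs : Function.Injective s)
    (F : ι → M) (K : ℕ) {ε : ℝ} (hε : 0 < ε) :
    ∃ i j m, K ≤ m ∧ s i m ≠ s j m ∧ dist (F i) (F j) < ε := by
  obtain ⟨a, _⟩ := exists_uncountable_preimage_singleton fun i (l : Fin K) => s i l
  obtain ⟨⟨i, hi⟩, ⟨j, hj⟩, hij, hdist⟩ :=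
    exists_ne_dist_lt (fun i : (fun i (l : Fin K) => s i l) ⁻¹' {a} => F i) hε
  obtain ⟨m, hm⟩ := Function.ne_iff.1 (hs.ne (Subtype.coe_ne_coe.2 hij))
  refine ⟨i, j, m, le_of_not_gt fun hmK => hm ?_, hm, hdist⟩
  exact congrFun (hi.trans hj.symm) ⟨m, hmK⟩

end Pigeonhole

namespace DavieSystem

variable (D : DavieSystem)

variable {B : Type*} [NonUnitalNormedRing B] [NormedSpace ℂ B]

theorem average_mul_coefficient {s : ℕ → Bool} {P : D.Space s →L[ℂ] B} {Q : D.EvalSpace s →L[ℂ] B}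
    {z : B} (hPQ : ∀ x y, P x * Q y = D.pairing s y x • z) (k : ℕ) :
    (average fun j => P (D.generator s k j) * Q (D.coefficient s k j)) = z := by
  simp [hPQ, pairing_coefficient_generator, average_const]

variable [IsScalarTower ℂ B B] [SMulCommClass ℂ B B]

theorem norm_average_mul_coefficient_le {s t : ℕ → Bool} {P : D.Space s →L[ℂ] B}
    {Q : D.EvalSpace t →L[ℂ] B} {C : ℝ} (hP : ‖P‖ ≤ C) (hQ : ‖Q‖ ≤ C)
    {k m : ℕ} (hkm : k ≤ m) (hm : s m ≠ t m) :
    ‖average fun j => P (D.generator s k j) * Q (D.coefficient t k j)‖ ≤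
      C * C * (8 * levelError (k + 1)) := by
  have hC : 0 ≤ C := (norm_nonneg _).trans hP
  refine D.norm_mixedTrace_le (T := (LinearMap.mul ℂ B).compl₁₂ P.toLinearMap Q.toLinearMap)
    (mul_nonneg hC hC) (fun x y => ?_) hkm hm
  calc ‖P x * Q y‖ ≤ ‖P x‖ * ‖Q y‖ := norm_mul_le _ _
    _ ≤ C * ‖x‖ * (C * ‖y‖) := by
      gcongr
      exacts [P.le_of_opNorm_le hP x, Q.le_of_opNorm_le hQ y]
    _ = C * C * ‖x‖ * ‖y‖ := by ring

theorem norm_le_of_pairing_factorization {s t : ℕ → Bool} {P : D.Space s →L[ℂ] B}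
    {P' : D.Space t →L[ℂ] B} {Q : D.EvalSpace t →L[ℂ] B} {z : B}
    (hPQ : ∀ x y, P' x * Q y = D.pairing t y x • z) {C ε : ℝ} (hP : ‖P‖ ≤ C) (hQ : ‖Q‖ ≤ C)
    {k m : ℕ} (hkm : k ≤ m) (hm : s m ≠ t m)
    (hPP' : ∀ j, ‖P' (D.generator t k j) - P (D.generator s k j)‖ ≤ ε) :
    ‖z‖ ≤ C * C * (8 * levelError (k + 1)) + ε * C := by
  have hsplit : z = (average fun j => P (D.generator s k j) * Q (D.coefficient t k j)) +
      average fun j => (P' (D.generator t k j) - P (D.generator s k j)) *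
        Q (D.coefficient t k j) := by
    simp only [sub_mul]
    rw [average_sub, D.average_mul_coefficient hPQ, add_sub_cancel]
  rw [hsplit]
  refine (norm_add_le _ _).trans (add_le_add (D.norm_average_mul_coefficient_le hP hQ hkm hm) ?_)
  refine norm_average_le fun j => (norm_mul_le _ _).trans ?_
  gcongr
  · exact (norm_nonneg _).trans (hPP' j)
  · exact hPP' j
  · exact (Q.le_of_opNorm_le_of_le hQ (D.norm_coefficient_le t j)).trans_eq (mul_one C)

theorem not_forall_pairing_factorization [TopologicalSpace.SeparableSpace B] :
    ¬ ∀ s, ∃ (P : D.Space s →L[ℂ] B) (Q : D.EvalSpace s →L[ℂ] B) (z : B), z ≠ 0 ∧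
      ∀ x y, P x * Q y = D.pairing s y x • z := by
  intro h
  choose P Q z hz hPQ using h
  have : Uncountable (ℕ → Bool) :=
    Cardinal.aleph0_lt_mk_iff.1 (by simp [Cardinal.aleph0_lt_continuum])
  obtain ⟨C, hC, _⟩ := exists_uncountable_setOf_le fun s => max (max ‖P s‖ ‖Q s‖) ‖z s‖⁻¹
  obtain ⟨K, hK⟩ := exists_levelError_lt (show 0 < C⁻¹ / (16 * (C * C)) by positivity)
  obtain ⟨⟨s, hs⟩, ⟨t, ht⟩, m, hKm, hm, hdist⟩ :=
    exists_apply_ne_dist_lt Subtype.val_injective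
      (fun (s : {s | max (max ‖P s‖ ‖Q s‖) ‖z s‖⁻¹ ≤ C}) j => P s (D.generator s K j)) K
      (show 0 < C⁻¹ / (2 * C) by positivity)
  simp only [Set.mem_ofPred_eq, max_le_iff] at hs ht
  have hclose (j) : ‖P t (D.generator t K j) - P s (D.generator s K j)‖ ≤ C⁻¹ / (2 * C) := by
    rw [← dist_eq_norm, dist_comm]
    exact ((dist_le_pi_dist _ _ j).trans_lt hdist).le
  have hsmall : ‖z t‖ < C⁻¹ := by
    calc ‖z t‖ ≤ C * C * (8 * levelError (K + 1)) + C⁻¹ / (2 * C) * C :=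
          D.norm_le_of_pairing_factorization (hPQ t) hs.1.1 ht.1.2 hKm hm hclose
      _ < C * C * (8 * (C⁻¹ / (16 * (C * C)))) + C⁻¹ / (2 * C) * C := by
          gcongr
          rw [levelError_succ]
          linarith [levelError_pos K]
      _ = C⁻¹ := by
          field_simp
          norm_num
  exact hsmall.not_ge (inv_le_of_inv_le₀ (norm_pos_iff.2 (hz t)) ht.2)

end DavieSystem

theorem no_universal_separable_commutative_Banach_algebra_contractive_general
    {B : Type*} [NonUnitalNormedRing B] [NormedSpace ℂ B] [IsScalarTower ℂ B B]
    [SMulCommClass ℂ B B] [TopologicalSpace.SeparableSpace B] :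
    ∃ A : SepCommBanachAlgebra,
      ¬ ∃ φ : A.carrier →ₙₐ[ℂ] B, Function.Injective φ ∧ Continuous φ := by
  obtain ⟨D⟩ := nonempty_davieSystem
  by_contra! hembed
  refine D.not_forall_pairing_factorization (B := B) fun s => ?_
  obtain ⟨φ, hφ, hcont⟩ := hembed (pairingAlgebra (D.norm_pairing_le s))
  exact exists_mul_eq_pairing_smul hφ hcont

/-- There is no separable commutative complex Banach algebra `B` such that every
separable commutative complex Banach algebra `A` admits a contractive homomorphic
embedding into `B`: for every separable commutative Banach algebra `B` there is a
separable commutative Banach algebra `A` such that no injective algebra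
homomorphism `φ : A → B` is simultaneously contractive and bounded below. -/
theorem no_universal_separable_commutative_Banach_algebra_contractive
    (B : SepCommBanachAlgebra) :
    ∃ A : SepCommBanachAlgebra,
      ¬ ∃ φ : A.carrier →ₙₐ[ℂ] B.carrier,
        Function.Injective φ ∧
        (∀ a : A.carrier, ‖φ a‖ ≤ ‖a‖) ∧
        (∃ c : ℝ, 0 < c ∧ ∀ a : A.carrier, c * ‖a‖ ≤ ‖φ a‖) :=
  no_universal_separable_commutative_Banach_algebra_contractive_general (B := B.carrier) |>.imp
    fun _A hA ⟨φ, hφ, hle, _⟩ => hA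
      ⟨φ, hφ, AddMonoidHomClass.continuous_of_bound φ 1 fun a => (hle a).trans_eq (one_mul _).symm⟩
end

section
/- There is no separable commutative complex Banach algebra B such that every separable commutative complex Banach algebra A admits a bounded homomorphic embedding into B; that is, for every separable commutative Banach algebra B there exists a separable commutative Banach algebra A such that no injective bounded algebra homomorphism φ : A → B is bounded below (i.e., there is no c > 0 with c‖a‖ ≤ ‖φ(a)‖ for all a). -/
/-!
Fix a separable `B`. For a suitable `f : ℤ → ℤ` there is a commutative Banach algebra generated by
`x`, `x⁻¹` and `u` with `u ^ 3 = 0`, in which `‖x ^ k * u‖ = 32 ^ (-f k)` for all `k : ℤ` and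
`‖u ^ 2‖ = 1`. Taking `f` odd and growing only along a set of blocks of integers prescribed by a
set `S` gives uncountably many algebras. If they all embedded into `B`, then uncountably many would
do so with the same constants, and by separability two of these, for sets `S` and `T`, would have
images `(s, a)` and `(t, b)` of `(x, u)` that are arbitrarily close. The sets are chosen such that
`T \ S` is infinite. On a block belonging to `T` but not to `S`, `s ^ (-n) * a` grows slowly, while
`t ^ n * b`, and then also `s ^ n * b`, decays fast. As `a * b = (s ^ (-n) * a) * (s ^ n * b)`, this
forces `a * b = 0`, although `a * b` is close to `b * b`, which is bounded away from zero.
-/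

open TopologicalSpace UniformSpace

section WeightedConvolution

variable {𝕜 G : Type*}

/-- The weighted `ℓ¹` norm `∑ ‖x g‖ ω g` on the semigroup algebra of `G`. -/
noncomputable def weightedL1Norm [SeminormedRing 𝕜] (ω : G → ℝ) (x : AddMonoidAlgebra 𝕜 G) : ℝ :=
  x.coeff.sum fun g c => ‖c‖ * ω g

theorem weightedL1Norm_single [SeminormedRing 𝕜] (ω : G → ℝ) (g : G) (c : 𝕜) :
    weightedL1Norm ω (.single g c) = ‖c‖ * ω g := by
  simp [weightedL1Norm]

theorem weightedL1Norm_add_le [SeminormedRing 𝕜] {ω : G → ℝ} (hω : ∀ g, 0 ≤ ω g)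
    (x y : AddMonoidAlgebra 𝕜 G) :
    weightedL1Norm ω (x + y) ≤ weightedL1Norm ω x + weightedL1Norm ω y := by
  classical
  unfold weightedL1Norm
  rw [AddMonoidAlgebra.coeff_add, Finsupp.sum_of_support_subset _ Finsupp.support_add _ (by simp),
    Finsupp.sum_of_support_subset x.coeff Finset.subset_union_left _ (by simp),
    Finsupp.sum_of_support_subset y.coeff Finset.subset_union_right _ (by simp),
    ← Finset.sum_add_distrib]
  gcongr with g
  rw [← add_mul]
  exact mul_le_mul_of_nonneg_right (norm_add_le _ _) (hω g)

theorem weightedL1Norm_mul_le [SeminormedRing 𝕜] [Add G] {ω : G → ℝ} (hω : ∀ g, 0 ≤ ω g)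
    (hadd : ∀ g h, ω (g + h) ≤ ω g * ω h) (x y : AddMonoidAlgebra 𝕜 G) :
    weightedL1Norm ω (x * y) ≤ weightedL1Norm ω x * weightedL1Norm ω y := by
  have hsum {ι : Type _} (s : Finset ι) (z : ι → AddMonoidAlgebra 𝕜 G) :
      weightedL1Norm ω (∑ i ∈ s, z i) ≤ ∑ i ∈ s, weightedL1Norm ω (z i) :=
    Finset.le_sum_of_subadditive _ (by simp [weightedL1Norm]) (weightedL1Norm_add_le hω) s z
  have hsingle (g h : G) (c d : 𝕜) :
      weightedL1Norm ω (.single (g + h) (c * d)) ≤ ‖c‖ * ω g * (‖d‖ * ω h) :=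
    calc weightedL1Norm ω (.single (g + h) (c * d)) = ‖c * d‖ * ω (g + h) :=
          weightedL1Norm_single ω _ _
      _ ≤ ‖c‖ * ‖d‖ * (ω g * ω h) :=
          mul_le_mul (norm_mul_le c d) (hadd g h) (hω _) (by positivity)
      _ = ‖c‖ * ω g * (‖d‖ * ω h) := by ring
  calc weightedL1Norm ω (x * y)
      ≤ ∑ g ∈ x.coeff.support, ∑ h ∈ y.coeff.support,
          weightedL1Norm ω (.single (g + h) (x.coeff g * y.coeff h)) := by
        rw [AddMonoidAlgebra.mul_def]
        exact (hsum _ _).trans (Finset.sum_le_sum fun g _ => hsum _ _)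
    _ ≤ ∑ g ∈ x.coeff.support, ∑ h ∈ y.coeff.support,
          ‖x.coeff g‖ * ω g * (‖y.coeff h‖ * ω h) := by
        gcongr with g _ h
        exact hsingle g h _ _
    _ = weightedL1Norm ω x * weightedL1Norm ω y := by
        simp only [weightedL1Norm, Finsupp.sum, Finset.sum_mul_sum]

/-- The weighted `ℓ¹` norm of a submultiplicative weight as a submultiplicative seminorm. The weight
may vanish, so the completion can be a proper quotient such as a truncated polynomial algebra. -/
noncomputable def weightedL1Seminorm [SeminormedRing 𝕜] [Add G] (ω : G → ℝ) (hω : ∀ g, 0 ≤ ω g)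
    (hadd : ∀ g h, ω (g + h) ≤ ω g * ω h) : RingSeminorm (AddMonoidAlgebra 𝕜 G) where
  toFun := weightedL1Norm ω
  map_zero' := by simp [weightedL1Norm]
  add_le' := weightedL1Norm_add_le hω
  neg' x := by simp [weightedL1Norm, Finsupp.sum]
  mul_le' := weightedL1Norm_mul_le hω hadd

theorem weightedL1Norm_smul [SeminormedRing 𝕜] [NormMulClass 𝕜] (ω : G → ℝ) (c : 𝕜)
    (x : AddMonoidAlgebra 𝕜 G) :
    weightedL1Norm ω (c • x) = ‖c‖ * weightedL1Norm ω x := by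
  unfold weightedL1Norm
  rw [AddMonoidAlgebra.coeff_smul, Finsupp.sum_smul_index (by simp), Finsupp.mul_sum]
  simp [mul_assoc]

theorem SepCommBanachAlgebra.exists_completion {R : Type} [CommRing R] [Algebra ℂ R]
    (p : RingSeminorm R) (hsmul : ∀ (c : ℂ) r, p (c • r) ≤ ‖c‖ * p r) {s : Set R}
    (hs : s.Countable) (hspan : Submodule.span ℂ s = ⊤) :
    ∃ (A : SepCommBanachAlgebra) (ι : R →ₙ* A.carrier), ∀ r, ‖ι r‖ = p r := by
  let : SeminormedCommRing R := { p.toSeminormedRing with mul_comm := mul_comm }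
  let : NormedAlgebra ℂ R := { ‹Algebra ℂ R› with norm_smul_le := hsmul }
  have : SeparableSpace R := by
    rw [← isSeparable_univ_iff, ← Submodule.top_coe (R := ℂ), ← hspan]
    exact hs.isSeparable.span
  exact ⟨⟨Completion R⟩, ⟨(↑), Completion.coe_mul⟩, Completion.norm_coe⟩

theorem span_range_single_one [Semiring 𝕜] :
    Submodule.span 𝕜 (Set.range fun g : G => AddMonoidAlgebra.single g (1 : 𝕜)) = ⊤ := by
  refine eq_top_iff.2 fun x _ => ?_
  rw [← x.sum_coeff_single]
  refine Submodule.sum_mem _ fun g _ => ?_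
  rw [← mul_one (x.coeff g), ← smul_eq_mul, ← AddMonoidAlgebra.smul_single]
  exact Submodule.smul_mem _ _ (Submodule.subset_span ⟨g, rfl⟩)

theorem SepCommBanachAlgebra.exists_norm_eq {G : Type} [AddCommMonoid G] [Countable G]
    (ω : G → ℝ) (hω : ∀ g, 0 ≤ ω g) (hadd : ∀ g h, ω (g + h) ≤ ω g * ω h) :
    ∃ (A : SepCommBanachAlgebra) (e : G → A.carrier),
      (∀ g h, e (g + h) = e g * e h) ∧ ∀ g, ‖e g‖ = ω g := by
  obtain ⟨A, ι, hι⟩ := SepCommBanachAlgebra.exists_completion (R := AddMonoidAlgebra ℂ G)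
    (weightedL1Seminorm ω hω hadd) (fun c x => (weightedL1Norm_smul ω c x).le)
    (s := Set.range fun g => .single g 1) (Set.countable_range _) span_range_single_one
  refine ⟨A, fun g => ι (.single g 1), fun g h => ?_, fun g => ?_⟩
  · rw [← map_mul, AddMonoidAlgebra.single_mul_single, one_mul]
  · rw [hι]
    exact (weightedL1Norm_single ω g (1 : ℂ)).trans (by simp)

end WeightedConvolution

section GradedWeight

/-- The norms of the monomials `x ^ k * u ^ i` in an algebra generated by `x`, `x⁻¹` and `u` with
`u ^ 3 = 0`. The exponents at `i = 0` and `i = 2` are chosen so that multiplication by `x` has norm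
one at every level and `‖u ^ 2‖ = 1`. -/
noncomputable def gradedWeight (β : ℝ) (f : ℤ → ℤ) : ℤ × ℕ → ℝ
  | (k, 0) => β ^ max (-k) 0
  | (k, 1) => β ^ (-f k)
  | (k, 2) => β ^ (-max k 0)
  | (_, _ + 3) => 0

theorem gradedWeight_nonneg {β : ℝ} (hβ : 0 ≤ β) (f : ℤ → ℤ) : ∀ g, 0 ≤ gradedWeight β f g
  | (_, 0) | (_, 1) | (_, 2) => zpow_nonneg hβ _
  | (_, _ + 3) => le_rfl

theorem gradedWeight_add_le {β : ℝ} (hβ : 1 ≤ β) {f : ℤ → ℤ}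
    (hf : ∀ k l, f l - f k ≤ max (l - k) 0) (hodd : ∀ k, f (-k) = -f k) (g h : ℤ × ℕ) :
    gradedWeight β f (g + h) ≤ gradedWeight β f g * gradedWeight β f h := by
  have hβ0 : 0 < β := one_pos.trans_le hβ
  have hpow {p q r : ℤ} (hpqr : p ≤ q + r) : β ^ p ≤ β ^ q * β ^ r := by
    rw [← zpow_add₀ hβ0.ne']
    exact zpow_le_zpow_right₀ hβ hpqr
  obtain ⟨k, i⟩ := g
  obtain ⟨l, j⟩ := h
  by_cases hij : 3 ≤ i + j
  · obtain ⟨n, hn⟩ := Nat.exists_eq_add_of_le' hij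
    rw [Prod.mk_add_mk, hn]
    exact mul_nonneg (gradedWeight_nonneg hβ0.le f _) (gradedWeight_nonneg hβ0.le f _)
  · rw [Prod.mk_add_mk]
    have hk := hf (k + l) k
    have hl := hf (k + l) l
    have hkl := hf (-l) k
    rw [hodd] at hkl
    obtain ⟨hi, hj⟩ : i ≤ 2 ∧ j ≤ 2 := by omega
    interval_cases i <;> interval_cases j <;> first | omega | exact hpow (by omega)

end GradedWeight

section WeightedOrbit

variable {B : Type*} [NonUnitalSeminormedCommRing B]

/-- The elements `a k` form a two-sided orbit of multiplication by `s` whose norms decay like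
`32 ^ (-f k)`, while `a 0 * a 0` stays away from zero. This is what remains of `a k = x ^ k * u`
and `s = x` in an algebra with the norms `gradedWeight 32 f` after an embedding with constant `C`;
the ambient ring need not have a unit. -/
structure IsWeightedOrbit (f : ℤ → ℤ) (C : ℝ) (s : B) (a : ℤ → B) : Prop where
  mul_eq : ∀ k, s * a k = a (k + 1)
  norm_le : ∀ k, ‖a k‖ ≤ C * 32 ^ (-f k)
  one_le_mul_norm : 1 ≤ C * ‖a 0 * a 0‖

theorem exists_isWeightedOrbit {f : ℤ → ℤ}
    (hf : ∀ k l, f l - f k ≤ max (l - k) 0) (hodd : ∀ k, f (-k) = -f k) :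
    ∃ (A : SepCommBanachAlgebra) (s : A.carrier) (a : ℤ → A.carrier), IsWeightedOrbit f 1 s a := by
  obtain ⟨A, e, hmul, hnorm⟩ := SepCommBanachAlgebra.exists_norm_eq (gradedWeight 32 f)
    (gradedWeight_nonneg (by norm_num) f) (gradedWeight_add_le (by norm_num) hf hodd)
  refine ⟨A, e (1, 0), fun k => e (k, 1), fun k => ?_, fun k => ?_, ?_⟩
  · rw [← hmul, Prod.mk_add_mk, add_comm]
  · simp [hnorm, gradedWeight]
  · simp [← hmul, hnorm, gradedWeight]

theorem IsWeightedOrbit.const_pos {f : ℤ → ℤ} {C : ℝ} {s : B} {a : ℤ → B}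
    (h : IsWeightedOrbit f C s a) : 0 < C :=
  pos_of_mul_pos_left (one_pos.trans_le h.one_le_mul_norm) (norm_nonneg _)

theorem IsWeightedOrbit.map {A : Type*} [NonUnitalSeminormedCommRing A] {f : ℤ → ℤ} {s : A}
    {a : ℤ → A} {C : ℝ} (h : IsWeightedOrbit f C s a) (φ : A →ₙ* B) {c K : ℝ}
    (hupper : ∀ x, ‖φ x‖ ≤ K * ‖x‖) (hlower : ∀ x, c * ‖x‖ ≤ ‖φ x‖) (hK : 0 ≤ K)
    (hKc : 1 ≤ K * c) : IsWeightedOrbit f (K * C) (φ s) (φ ∘ a) where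
  mul_eq k := by simp [← map_mul, h.mul_eq]
  norm_le k := by
    rw [mul_assoc]
    exact (hupper _).trans (mul_le_mul_of_nonneg_left (h.norm_le k) hK)
  one_le_mul_norm := by
    have hC : 0 ≤ C := h.const_pos.le
    calc (1 : ℝ) ≤ C * ‖a 0 * a 0‖ := h.one_le_mul_norm
      _ ≤ K * c * (C * ‖a 0 * a 0‖) := le_mul_of_one_le_left (by positivity) hKc
      _ = K * C * (c * ‖a 0 * a 0‖) := by ring
      _ ≤ K * C * ‖φ (a 0 * a 0)‖ := by gcongr; exact hlower _
      _ = K * C * ‖φ (a 0) * φ (a 0)‖ := by rw [map_mul]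

/- The bound comes from `y 0 * w 0 = y n * (t + (s - t)) ^ n * w 0`. The induction avoids the
powers, and hence a unit, because `(s - t) * w` is again an orbit of `t`. -/
theorem norm_mul_le_two_pow_mul {s t : B} {y w : ℕ → B} (hy : ∀ k, s * y (k + 1) = y k)
    (hw : ∀ k, t * w k = w (k + 1)) {M : ℝ} {n : ℕ}
    (hM : ∀ l m, l + m = n → ‖s - t‖ ^ l * ‖w m‖ ≤ M) :
    ‖y 0 * w 0‖ ≤ 2 ^ n * (‖y n‖ * M) := by
  induction n generalizing y w with
  | zero =>
    calc ‖y 0 * w 0‖ ≤ ‖y 0‖ * ‖w 0‖ := norm_mul_le _ _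
      _ ≤ 2 ^ 0 * (‖y 0‖ * M) := by
        rw [pow_zero, one_mul]
        gcongr
        simpa using hM 0 0 rfl
  | succ n ih =>
    have hshift : ‖y 1 * w 1‖ ≤ 2 ^ n * (‖y (n + 1)‖ * M) :=
      ih (y := fun k => y (k + 1)) (w := fun k => w (k + 1)) (fun k => hy _) (fun k => hw _)
        fun l m hlm => hM l (m + 1) (by omega)
    have hdiff : ‖y 1 * ((s - t) * w 0)‖ ≤ 2 ^ n * (‖y (n + 1)‖ * M) := by
      refine ih (y := fun k => y (k + 1)) (w := fun k => (s - t) * w k) (fun k => hy _)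
        (fun k => by rw [mul_left_comm, hw]) fun l m hlm => ?_
      calc ‖s - t‖ ^ l * ‖(s - t) * w m‖ ≤ ‖s - t‖ ^ l * (‖s - t‖ * ‖w m‖) := by
            gcongr; exact norm_mul_le _ _
        _ = ‖s - t‖ ^ (l + 1) * ‖w m‖ := by ring
        _ ≤ M := hM _ _ (by omega)
    have hsplit : y 0 * w 0 = y 1 * w 1 + y 1 * ((s - t) * w 0) := by
      rw [← hy 0, ← hw 0, zero_add, ← mul_add, ← add_mul, add_sub_cancel, mul_comm s, mul_assoc]
    calc ‖y 0 * w 0‖ ≤ ‖y 1 * w 1‖ + ‖y 1 * ((s - t) * w 0)‖ := hsplit ▸ norm_add_le _ _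
      _ ≤ 2 ^ n * (‖y (n + 1)‖ * M) + 2 ^ n * (‖y (n + 1)‖ * M) := add_le_add hshift hdiff
      _ = 2 ^ (n + 1) * (‖y (n + 1)‖ * M) := by ring

end WeightedOrbit

section BlockCount

open scoped Classical in
/-- The number of `k < n` lying in a block `[4 ^ i, 4 ^ (i + 1))` with `i ∈ S`; the junk value
`Nat.log 4 0 = 0` puts `k = 0` into the block of `i = 0`. -/
noncomputable def blockCount (S : Set ℕ) (n : ℕ) : ℕ :=
  Nat.count (fun k => Nat.log 4 k ∈ S) n

theorem blockCount_mono (S : Set ℕ) : Monotone (blockCount S) :=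
  open scoped Classical in Nat.count_monotone _

theorem blockCount_add_le (S : Set ℕ) (m n : ℕ) : blockCount S (m + n) ≤ blockCount S m + n := by
  classical
  rw [blockCount, Nat.count_add]
  exact Nat.add_le_add_left (Nat.count_le _) _

theorem log_four_pow_add {i k : ℕ} (hk : k < 3 * 4 ^ i) : Nat.log 4 (4 ^ i + k) = i :=
  Nat.log_eq_of_pow_le_of_lt_pow (by omega) (by rw [pow_succ]; omega)

theorem blockCount_le_of_notMem {S : Set ℕ} {i : ℕ} (hi : i ∉ S) :
    blockCount S (4 ^ (i + 1)) ≤ 4 ^ i := by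
  classical
  have hblock : Nat.count (fun k => Nat.log 4 (4 ^ i + k) ∈ S) (3 * 4 ^ i) = 0 :=
    Nat.count_iff_forall_not.2 fun k hk => by rwa [log_four_pow_add hk]
  rw [show 4 ^ (i + 1) = 4 ^ i + 3 * 4 ^ i by ring, blockCount, Nat.count_add, hblock]
  exact Nat.count_le _

theorem le_blockCount_of_mem {S : Set ℕ} {i m : ℕ} (hi : i ∈ S) (hm : 3 * 4 ^ i ≤ m) :
    2 * 4 ^ i ≤ blockCount S m := by
  classical
  have hblock : Nat.count (fun k => Nat.log 4 (4 ^ i + k) ∈ S) (2 * 4 ^ i) = 2 * 4 ^ i :=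
    Nat.count_iff_forall.2 fun k hk => by rwa [log_four_pow_add (by omega)]
  calc 2 * 4 ^ i ≤ blockCount S (4 ^ i + 2 * 4 ^ i) := by
        rw [blockCount, Nat.count_add, hblock]; exact Nat.le_add_left _ _
    _ ≤ blockCount S m := blockCount_mono S (by omega)

/-- The odd extension of `blockCount S` to the integers, used as the exponent of a weight. -/
noncomputable def oddBlockCount (S : Set ℕ) (k : ℤ) : ℤ :=
  blockCount S k.toNat - blockCount S (-k).toNat

theorem oddBlockCount_natCast (S : Set ℕ) (n : ℕ) : oddBlockCount S n = blockCount S n := by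
  simp [oddBlockCount, blockCount]

theorem oddBlockCount_neg (S : Set ℕ) (k : ℤ) : oddBlockCount S (-k) = -oddBlockCount S k := by
  simp [oddBlockCount]

theorem oddBlockCount_sub_le (S : Set ℕ) (k l : ℤ) :
    oddBlockCount S l - oddBlockCount S k ≤ max (l - k) 0 := by
  have hstep (m n : ℕ) : (blockCount S n : ℤ) - blockCount S m ≤ max ((n : ℤ) - m) 0 := by
    rcases le_total m n with hmn | hnm
    · have := blockCount_add_le S m (n - m)
      rw [Nat.add_sub_cancel' hmn] at this
      omega
    · have := blockCount_mono S hnm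
      omega
  have hpos := hstep k.toNat l.toNat
  have hneg := hstep (-l).toNat (-k).toNat
  unfold oddBlockCount
  omega

end BlockCount

namespace IsWeightedOrbit

variable {B : Type*} [NonUnitalSeminormedCommRing B] {S T : Set ℕ} {C : ℝ} {s t : B} {a b : ℤ → B}

theorem norm_neg_natCast_le (h : IsWeightedOrbit (oddBlockCount S) C s a) (n : ℕ) :
    ‖a (-n)‖ ≤ C * 32 ^ blockCount S n := by
  simpa [oddBlockCount_neg, oddBlockCount_natCast] using h.norm_le (-n)

theorem norm_natCast_le (h : IsWeightedOrbit (oddBlockCount S) C s a) (n : ℕ) :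
    ‖a n‖ ≤ C * (1 / 32) ^ blockCount S n := by
  simpa [oddBlockCount_natCast] using h.norm_le n

theorem norm_zero_le (h : IsWeightedOrbit (oddBlockCount S) C s a) : ‖a 0‖ ≤ C := by
  simpa [blockCount] using h.norm_natCast_le 0

theorem norm_pow_mul_norm_le (h : IsWeightedOrbit (oddBlockCount T) C t b) {δ : ℝ} (hδ0 : 0 ≤ δ)
    (hδ : δ ≤ (1 / 32) ^ 2) {i l m : ℕ} (hi : i ∈ T) (hlm : l + m = 4 ^ (i + 1)) :
    δ ^ l * ‖b m‖ ≤ C * (1 / 32) ^ (2 * 4 ^ i) := by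
  have hbm := h.norm_natCast_le m
  have hC := h.const_pos
  rcases le_or_gt (3 * 4 ^ i) m with hm | hm
  · calc δ ^ l * ‖b m‖ ≤ 1 * (C * (1 / 32) ^ (2 * 4 ^ i)) := by
          gcongr
          · exact pow_le_one₀ hδ0 (hδ.trans (by norm_num))
          · refine hbm.trans ?_
            gcongr ?_ * ?_
            exact pow_le_pow_of_le_one (by norm_num) (by norm_num) (le_blockCount_of_mem hi hm)
      _ = C * (1 / 32) ^ (2 * 4 ^ i) := one_mul _
  · have hl : 4 ^ i ≤ l := by rw [pow_succ] at hlm; omega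
    calc δ ^ l * ‖b m‖ ≤ ((1 / 32) ^ 2) ^ 4 ^ i * C := by
          gcongr
          · exact (pow_le_pow_left₀ hδ0 hδ l).trans
              (pow_le_pow_of_le_one (by norm_num) (by norm_num) hl)
          · exact hbm.trans (mul_le_of_le_one_right hC.le
              (pow_le_one₀ (by norm_num) (by norm_num)))
      _ = C * (1 / 32) ^ (2 * 4 ^ i) := by rw [← pow_mul, mul_comm]

theorem norm_mul_le (ha : IsWeightedOrbit (oddBlockCount S) C s a)
    (hb : IsWeightedOrbit (oddBlockCount T) C t b) (hst : ‖s - t‖ ≤ (1 / 32) ^ 2) {i : ℕ}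
    (hiS : i ∉ S) (hiT : i ∈ T) : ‖a 0 * b 0‖ ≤ C ^ 2 * (1 / 2) ^ 4 ^ i := by
  have hC := ha.const_pos
  have hfactor : ‖a 0 * b 0‖ ≤ 2 ^ 4 ^ (i + 1) *
      (‖a (-(4 ^ (i + 1) : ℕ))‖ * (C * (1 / 32) ^ (2 * 4 ^ i))) :=
    norm_mul_le_two_pow_mul (y := fun k => a (-k)) (w := fun k => b k)
      (fun k => by simp [ha.mul_eq]) (fun k => by simp [hb.mul_eq])
      fun l m hlm => hb.norm_pow_mul_norm_le (norm_nonneg _) hst hiT hlm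
  have hslow : ‖a (-(4 ^ (i + 1) : ℕ))‖ ≤ C * 32 ^ 4 ^ i := by
    refine (ha.norm_neg_natCast_le _).trans ?_
    gcongr
    · norm_num
    · exact blockCount_le_of_notMem hiS
  calc ‖a 0 * b 0‖
      ≤ 2 ^ 4 ^ (i + 1) * (C * 32 ^ 4 ^ i * (C * (1 / 32) ^ (2 * 4 ^ i))) :=
        hfactor.trans (by gcongr)
    _ = C ^ 2 * (2 ^ 4 * 32 * (1 / 32) ^ 2) ^ 4 ^ i := by
        rw [mul_pow, mul_pow, ← pow_mul, ← pow_mul, pow_succ' 4 i]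
        ring
    _ = C ^ 2 * (1 / 2) ^ 4 ^ i := by norm_num

theorem norm_mul_eq_zero (ha : IsWeightedOrbit (oddBlockCount S) C s a)
    (hb : IsWeightedOrbit (oddBlockCount T) C t b) (hst : ‖s - t‖ ≤ (1 / 32) ^ 2)
    (hTS : (T \ S).Infinite) : ‖a 0 * b 0‖ = 0 := by
  have hlim : Filter.Tendsto (fun i : ℕ => C ^ 2 * (1 / 2 : ℝ) ^ 4 ^ i) Filter.atTop (nhds 0) := by
    simpa using ((tendsto_pow_atTop_nhds_zero_of_lt_one (r := (1 / 2 : ℝ)) (by norm_num)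
      (by norm_num)).comp (tendsto_pow_atTop_atTop_of_one_lt (by norm_num : 1 < 4))).const_mul
        (C ^ 2)
  exact (ge_of_tendsto_of_frequently hlim ((Nat.frequently_atTop_iff_infinite.2 hTS).mono
    fun i hi => ha.norm_mul_le hb hst hi.2 hi.1)).antisymm (norm_nonneg _)

theorem one_le_sq_mul_norm_sub (ha : IsWeightedOrbit (oddBlockCount S) C s a)
    (hb : IsWeightedOrbit (oddBlockCount T) C t b) (hst : ‖s - t‖ ≤ (1 / 32) ^ 2)
    (hTS : (T \ S).Infinite) : 1 ≤ C ^ 2 * ‖a 0 - b 0‖ := by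
  have hC := ha.const_pos
  have hsub : ‖b 0 * b 0‖ ≤ ‖a 0 - b 0‖ * C :=
    calc ‖b 0 * b 0‖ = ‖a 0 * b 0 - (a 0 - b 0) * b 0‖ := by rw [sub_mul, sub_sub_cancel]
      _ ≤ ‖a 0 * b 0‖ + ‖(a 0 - b 0) * b 0‖ := norm_sub_le _ _
      _ = ‖(a 0 - b 0) * b 0‖ := by rw [ha.norm_mul_eq_zero hb hst hTS, zero_add]
      _ ≤ ‖a 0 - b 0‖ * C := norm_mul_le_of_le le_rfl hb.norm_zero_le
  calc 1 ≤ C * ‖b 0 * b 0‖ := hb.one_le_mul_norm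
    _ ≤ C * (‖a 0 - b 0‖ * C) := by gcongr
    _ = C ^ 2 * ‖a 0 - b 0‖ := by ring

end IsWeightedOrbit

theorem exists_ne_eq_dist_lt {ι κ X : Type*} [Uncountable ι] [Countable κ] [PseudoMetricSpace X]
    [SeparableSpace X] (q : ι → κ) (F : ι → X) {ε : κ → ℝ} (hε : ∀ k, 0 < ε k) :
    ∃ i j, i ≠ j ∧ q i = q j ∧ dist (F i) (F j) < ε (q i) := by
  have : Nonempty X := (inferInstance : Nonempty ι).map F
  choose n hn using fun i => (denseRange_denseSeq X).exists_dist_lt (F i) (half_pos (hε (q i)))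
  have hninj : ¬ Function.Injective fun i => (q i, n i) := fun hinj =>
    not_countable hinj.countable
  obtain ⟨i, j, hij, hne⟩ := Function.not_injective_iff.1 hninj
  obtain ⟨hq, hn'⟩ := Prod.mk.inj hij
  refine ⟨i, j, hne, hq, ?_⟩
  have hi := hn i
  have hj := hn j
  rw [← hq, ← hn'] at hj
  linarith [dist_triangle_right (F i) (F j) (denseSeq X (n i))]

instance {α : Type*} [Infinite α] : Uncountable (Set α) := by
  rw [← Cardinal.aleph0_lt_mk_iff, Cardinal.mk_set]
  exact (Cardinal.aleph0_le_mk α).trans_lt (Cardinal.cantor _)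

theorem infinite_preimage_unpair_fst_diff {S T : Set ℕ} (h : ¬ T ⊆ S) :
    ((fun n : ℕ => n.unpair.1) ⁻¹' T \ (fun n : ℕ => n.unpair.1) ⁻¹' S).Infinite := by
  obtain ⟨j, hjT, hjS⟩ := Set.not_subset.1 h
  exact Set.infinite_of_injective_forall_mem (f := Nat.pair j)
    (fun m n hmn => (Nat.pair_eq_pair.1 hmn).2) fun n => by simp [hjT, hjS]

theorem exists_isWeightedOrbit_of_embedding {B : Type*} [NonUnitalSeminormedCommRing B]
    (h : ∀ A : SepCommBanachAlgebra, ∃ φ : A.carrier →ₙ* B,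
      (∃ C : ℝ, ∀ a, ‖φ a‖ ≤ C * ‖a‖) ∧ ∃ c : ℝ, 0 < c ∧ ∀ a, c * ‖a‖ ≤ ‖φ a‖)
    {f : ℤ → ℤ} (hf : ∀ k l, f l - f k ≤ max (l - k) 0) (hodd : ∀ k, f (-k) = -f k) :
    ∃ (q : ℕ) (s : B) (a : ℤ → B), IsWeightedOrbit f q s a := by
  obtain ⟨A, s, a, hsa⟩ := exists_isWeightedOrbit hf hodd
  obtain ⟨φ, ⟨C, hC⟩, c, hc, hlower⟩ := h A
  obtain ⟨q, hq⟩ := exists_nat_ge (max C c⁻¹)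
  refine ⟨q, φ s, φ ∘ a, mul_one (q : ℝ) ▸
    hsa.map φ (fun x => (hC x).trans ?_) hlower (Nat.cast_nonneg _) ?_⟩
  · gcongr
    exact (le_max_left _ _).trans hq
  · exact (inv_le_iff_one_le_mul₀ hc).1 ((le_max_right _ _).trans hq)

theorem no_universal_separable_commutative_Banach_algebra_bounded_general
    (B : Type*) [NonUnitalSeminormedCommRing B] [SeparableSpace B] :
    ∃ A : SepCommBanachAlgebra,
      ¬ ∃ φ : A.carrier →ₙ* B,
        (∃ C : ℝ, ∀ a, ‖φ a‖ ≤ C * ‖a‖) ∧ ∃ c : ℝ, 0 < c ∧ ∀ a, c * ‖a‖ ≤ ‖φ a‖ := by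
  by_contra! hembed
  choose q s a horbit using fun S : Set ℕ =>
    let S' := (fun n : ℕ => n.unpair.1) ⁻¹' S
    exists_isWeightedOrbit_of_embedding hembed (oddBlockCount_sub_le S') (oddBlockCount_neg S')
  obtain ⟨S, T, hne, hq, hdist⟩ := exists_ne_eq_dist_lt q (fun S => (s S, a S 0))
    (ε := fun q => min ((1 / 32) ^ 2) ((q : ℝ) ^ 2 + 1)⁻¹) fun q => by positivity
  wlog hTS : ¬ T ⊆ S generalizing S T
  · exact this T S hne.symm hq.symm (by rwa [dist_comm, ← hq])
      fun hST => hne (hST.antisymm (not_not.1 hTS))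
  rw [Prod.dist_eq, max_lt_iff, lt_min_iff, lt_min_iff, dist_eq_norm, dist_eq_norm] at hdist
  obtain ⟨⟨hs, -⟩, -, ha⟩ := hdist
  have hle : 1 ≤ (q S : ℝ) ^ 2 * ‖a S 0 - a T 0‖ :=
    (horbit S).one_le_sq_mul_norm_sub (hq ▸ horbit T) hs.le (infinite_preimage_unpair_fst_diff hTS)
  rw [← one_div, lt_div_iff₀ (by positivity)] at ha
  linarith [norm_nonneg (a S 0 - a T 0)]

/-- There is no separable commutative complex Banach algebra `B` such that every
separable commutative complex Banach algebra `A` admits a bounded homomorphic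
embedding into `B`: for every separable commutative Banach algebra `B` there is a
separable commutative Banach algebra `A` such that no injective bounded algebra
homomorphism `φ : A → B` is bounded below. -/
theorem no_universal_separable_commutative_Banach_algebra_bounded
    (B : SepCommBanachAlgebra) :
    ∃ A : SepCommBanachAlgebra,
      ¬ ∃ φ : A.carrier →ₙₐ[ℂ] B.carrier,
        Function.Injective φ ∧
        (∃ C : ℝ, ∀ a : A.carrier, ‖φ a‖ ≤ C * ‖a‖) ∧
        (∃ c : ℝ, 0 < c ∧ ∀ a : A.carrier, c * ‖a‖ ≤ ‖φ a‖) := by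
  obtain ⟨A, hA⟩ := no_universal_separable_commutative_Banach_algebra_bounded_general B.carrier
  exact ⟨A, fun ⟨φ, _, hupper, hlower⟩ => hA ⟨φ, hupper, hlower⟩⟩
end

section
/- There is no separable complex Banach algebra B such that every separable complex Banach algebra A admits a contractive homomorphic embedding into B; that is, for every separable Banach algebra B there exists a separable Banach algebra A such that no injective algebra homomorphism φ : A → B satisfies both ‖φ(a)‖ ≤ ‖a‖ for all a and the existence of c > 0 with c‖a‖ ≤ ‖φ(a)‖ for all a. -/
/-- A bundled separable complex Banach algebra: a complete normed (not
necessarily unital, not necessarily commutative) ring which is a normed space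
over `ℂ` whose multiplication is `ℂ`-bilinear, and whose underlying metric
space is separable. -/
structure SepBanachAlgebra : Type 1 where
  carrier : Type
  [ring : NonUnitalNormedRing carrier]
  [normedSpace : NormedSpace ℂ carrier]
  [tower : IsScalarTower ℂ carrier carrier]
  [smulComm : SMulCommClass ℂ carrier carrier]
  [complete : CompleteSpace carrier]
  [separable : TopologicalSpace.SeparableSpace carrier]

attribute [instance] SepBanachAlgebra.ring SepBanachAlgebra.normedSpace
  SepBanachAlgebra.tower SepBanachAlgebra.smulComm
  SepBanachAlgebra.complete SepBanachAlgebra.separable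

/-!
Let `Q p = (ℤ/p)²`, let `s p` be the quadratic character of the first coordinate and let `σ p` be
the two unit translations and the two elementary shears of `Q p`. On `Q p × Q q ≃ (ℤ/pq)²`, for
`p ≠ q`, these four moves satisfy a Poincaré inequality with a universal constant, so by duality
`s p ⊗ s q` is a coboundary `∑ i, (g i ∘ (σ i)⁻¹ - g i)` with `|g i| ≤ 400`. For each set `S` of odd
primes, these coboundaries give a separable algebra with a coding system: finitely many elements
`x i`, `y`, `L`, `w`, on which bounded blocks `U p`, `p ∈ S`, act from the left and `V q`, `q ∉ S`,
from the right. If systems coding `S` and `T` lie in one algebra and `p ∈ S \ T`, then summing the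
products of the `U p` of the first, the `x i` and the `V p` of the second by parts bounds `w` by the
distance between `(x, y, L)` and `(x', y', L')`. Continuous injective homomorphisms transport all
`2 ^ ℵ₀` systems to one algebra, where two of them would be too close if the algebra were separable.
-/

open Finset

section Energy

variable {G : Type*} [Fintype G]

lemma sum_sq_sub_symm (a : G → ℝ) (σ : Equiv.Perm G) :
    ∑ z, (a z - a (σ.symm z)) ^ 2 = ∑ z, (a z - a (σ z)) ^ 2 := by
  rw [← Equiv.sum_comp σ fun z => (a z - a (σ.symm z)) ^ 2]
  simp only [Equiv.symm_apply_apply, sub_sq_comm]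

lemma sum_sq_le_sum_sq_image [DecidableEq G] {f : G → G} (hf : Function.Injective f) (a : G → ℝ)
    (s : Finset G) {t : ℝ} (ht : 0 < t) :
    ∑ z ∈ s, a z ^ 2 ≤
      ∑ z ∈ s.image f, a z ^ 2 + (t * ∑ z, (a z - a (f z)) ^ 2 + (∑ z, a z ^ 2) / t) := by
  have young (u v : ℝ) : u ^ 2 - v ^ 2 ≤ t * (u - v) ^ 2 + (u ^ 2 + v ^ 2) / (2 * t) := by
    have hsq : t * (u - v) ^ 2 + (u ^ 2 + v ^ 2) / (2 * t) - (u ^ 2 - v ^ 2) =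
        ((2 * t * (u - v) - (u + v)) ^ 2 + (u - v) ^ 2) / (4 * t) := by
      field
    have : 0 ≤ ((2 * t * (u - v) - (u + v)) ^ 2 + (u - v) ^ 2) / (4 * t) := by positivity
    linarith
  have hperm : ∑ z, a (f z) ^ 2 = ∑ z, a z ^ 2 :=
    hf.bijective_of_finite.sum_comp fun z => a z ^ 2
  have hdiff : ∑ z ∈ s, a z ^ 2 - ∑ z ∈ s.image f, a z ^ 2 ≤
      t * ∑ z, (a z - a (f z)) ^ 2 + (∑ z, a z ^ 2) / t := calc
    _ = ∑ z ∈ s, (a z ^ 2 - a (f z) ^ 2) := by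
      rw [sum_image hf.injOn, sum_sub_distrib]
    _ ≤ ∑ z ∈ s, (t * (a z - a (f z)) ^ 2 + (a z ^ 2 + a (f z) ^ 2) / (2 * t)) :=
      sum_le_sum fun z _ => young _ _
    _ ≤ ∑ z, (t * (a z - a (f z)) ^ 2 + (a z ^ 2 + a (f z) ^ 2) / (2 * t)) :=
      sum_le_univ_sum_of_nonneg fun z => by positivity
    _ = _ := by
      rw [sum_add_distrib, ← mul_sum, ← sum_div, sum_add_distrib, hperm]
      field
  linarith

lemma sum_sq_filter_le_inter_add_compl [DecidableEq G] (a : G → ℝ) (p : G → Prop)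
    [DecidablePred p] (w : Finset G) :
    ∑ z with p z, a z ^ 2 ≤ ∑ z ∈ w with p z, a z ^ 2 + ∑ z ∈ wᶜ, a z ^ 2 := by
  have hsub : univ.filter p ⊆ w.filter p ∪ wᶜ := fun z hz => by
    by_cases hw : z ∈ w <;> simp_all
  have hdisj : Disjoint (w.filter p) wᶜ :=
    disjoint_compl_right.mono_left (filter_subset p w)
  rw [← sum_union hdisj]
  exact sum_le_sum_of_subset_of_nonneg hsub fun z _ _ => sq_nonneg _

variable [DecidableEq G] {p q : G → Prop} [DecidablePred p] [DecidablePred q] {w : Finset G}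

lemma sum_sq_filter_le_of_mapsTo {f : G → G} (hf : Function.Injective f) (a : G → ℝ)
    (hmaps : ∀ z ∈ w, q z → p (f z)) {t : ℝ} (ht : 0 < t) :
    ∑ z with q z, a z ^ 2 ≤ ∑ z with p z, a z ^ 2 +
      (t * ∑ z, (a z - a (f z)) ^ 2 + (∑ z, a z ^ 2) / t) + ∑ z ∈ wᶜ, a z ^ 2 := by
  have himage : (w.filter q).image f ⊆ univ.filter p := by
    simpa [image_subset_iff] using hmaps
  have hmono : ∑ z ∈ (w.filter q).image f, a z ^ 2 ≤ ∑ z with p z, a z ^ 2 :=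
    sum_le_sum_of_subset_of_nonneg himage fun z _ _ => sq_nonneg _
  linarith [sum_sq_filter_le_inter_add_compl a q w, sum_sq_le_sum_sq_image hf a (w.filter q) ht]

lemma sum_sq_filter_le_of_pingPong {f g : G → G} (hf : Function.Injective f)
    (hg : Function.Injective g) (a : G → ℝ) (hpf : ∀ z ∈ w, p z → p (f z))
    (hpg : ∀ z ∈ w, p z → p (g z)) (hfg : ∀ y ∈ w, p y → ∀ z ∈ w, p z → f y ≠ g z)
    {t : ℝ} (ht : 0 < t) :
    ∑ z with p z, a z ^ 2 ≤ (t * ∑ z, (a z - a (f z)) ^ 2 + (∑ z, a z ^ 2) / t) +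
      (t * ∑ z, (a z - a (g z)) ^ 2 + (∑ z, a z ^ 2) / t) + 2 * ∑ z ∈ wᶜ, a z ^ 2 := by
  have hdisj : Disjoint ((w.filter p).image f) ((w.filter p).image g) := by
    simp only [disjoint_left, mem_image, mem_filter]
    rintro _ ⟨y, ⟨hyw, hyp⟩, rfl⟩ ⟨z, ⟨hzw, hzp⟩, hzy⟩
    exact hfg y hyw hyp z hzw hzp hzy.symm
  have himage : (w.filter p).image f ∪ (w.filter p).image g ⊆ univ.filter p := by
    refine union_subset ?_ ?_
    · simpa [image_subset_iff] using hpf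
    · simpa [image_subset_iff] using hpg
  have hmono := sum_le_sum_of_subset_of_nonneg himage fun z _ _ => sq_nonneg (a z)
  rw [sum_union hdisj] at hmono
  linarith [sum_sq_filter_le_inter_add_compl a p w, sum_sq_le_sum_sq_image hf a (w.filter p) ht,
    sum_sq_le_sum_sq_image hg a (w.filter p) ht]

end Energy

section Shears

variable (R : Type*) [AddGroup R]

/-- The unipotent map `(x, y) ↦ (x + y, y)` of `R²`. -/
@[simps]
def shearFst : Equiv.Perm (R × R) where
  toFun z := (z.1 + z.2, z.2)
  invFun z := (z.1 - z.2, z.2)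
  left_inv z := by simp
  right_inv z := by simp

/-- The unipotent map `(x, y) ↦ (x, y + x)` of `R²`. -/
@[simps]
def shearSnd : Equiv.Perm (R × R) where
  toFun z := (z.1, z.2 + z.1)
  invFun z := (z.1, z.2 - z.1)
  left_inv z := by simp
  right_inv z := by simp

end Shears

section PingPong

variable {N : ℕ} [NeZero N]

lemma valMinAbs_add_of_four_mul_abs_lt {x y : ZMod N} (hx : 4 * |x.valMinAbs| < N)
    (hy : 4 * |y.valMinAbs| < N) : (x + y).valMinAbs = x.valMinAbs + y.valMinAbs := by
  rw [ZMod.valMinAbs_spec, Set.mem_Ioc]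
  refine ⟨by simp, ?_⟩
  grind

lemma valMinAbs_sub_of_four_mul_abs_lt {x y : ZMod N} (hx : 4 * |x.valMinAbs| < N)
    (hy : 4 * |y.valMinAbs| < N) : (x - y).valMinAbs = x.valMinAbs - y.valMinAbs := by
  rw [ZMod.valMinAbs_spec, Set.mem_Ioc]
  refine ⟨by simp, ?_⟩
  grind

variable (N) in
/-- The points of `(ℤ/N)²` whose coordinates have representatives of absolute value less than
`N / 4`; the shears act on them as they do on `ℤ²`. -/
def centralWindow : Finset (ZMod N × ZMod N) :=
  {z | 4 * |z.1.valMinAbs| < N ∧ 4 * |z.2.valMinAbs| < N}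

lemma mem_centralWindow {z : ZMod N × ZMod N} :
    z ∈ centralWindow N ↔ 4 * |z.1.valMinAbs| < N ∧ 4 * |z.2.valMinAbs| < N := by
  simp [centralWindow]

lemma valMinAbs_shears {z : ZMod N × ZMod N} (hz : z ∈ centralWindow N) :
    (z.1 + z.2).valMinAbs = z.1.valMinAbs + z.2.valMinAbs ∧
    (z.2 + z.1).valMinAbs = z.2.valMinAbs + z.1.valMinAbs ∧
    (z.1 - z.2).valMinAbs = z.1.valMinAbs - z.2.valMinAbs ∧
    (z.2 - z.1).valMinAbs = z.2.valMinAbs - z.1.valMinAbs := by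
  obtain ⟨h₁, h₂⟩ := mem_centralWindow.1 hz
  exact ⟨valMinAbs_add_of_four_mul_abs_lt h₁ h₂, valMinAbs_add_of_four_mul_abs_lt h₂ h₁,
    valMinAbs_sub_of_four_mul_abs_lt h₁ h₂, valMinAbs_sub_of_four_mul_abs_lt h₂ h₁⟩

/-- The open first and third quadrants. -/
def SameSign (z : ZMod N × ZMod N) : Prop :=
  (0 < z.1.valMinAbs ∧ 0 < z.2.valMinAbs) ∨ (z.1.valMinAbs < 0 ∧ z.2.valMinAbs < 0)

/-- The open second and fourth quadrants. -/
def OppositeSign (z : ZMod N × ZMod N) : Prop :=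
  (0 < z.1.valMinAbs ∧ z.2.valMinAbs < 0) ∨ (z.1.valMinAbs < 0 ∧ 0 < z.2.valMinAbs)

instance : DecidablePred (SameSign (N := N)) := fun _ => inferInstanceAs (Decidable (_ ∨ _))

instance : DecidablePred (OppositeSign (N := N)) := fun _ => inferInstanceAs (Decidable (_ ∨ _))

lemma sum_sq_sameSign_le (a : ZMod N × ZMod N → ℝ) {t : ℝ} (ht : 0 < t) :
    ∑ z with SameSign z, a z ^ 2 ≤
      (t * ∑ z, (a z - a (shearFst _ z)) ^ 2 + (∑ z, a z ^ 2) / t) +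
      (t * ∑ z, (a z - a (shearSnd _ z)) ^ 2 + (∑ z, a z ^ 2) / t) +
      2 * ∑ z ∈ (centralWindow N)ᶜ, a z ^ 2 := by
  refine sum_sq_filter_le_of_pingPong (shearFst _).injective (shearSnd _).injective a
    ?_ ?_ ?_ ht
  · intro z hz hp
    have := valMinAbs_shears hz
    simp only [SameSign, shearFst_apply] at hp ⊢
    omega
  · intro z hz hp
    have := valMinAbs_shears hz
    simp only [SameSign, shearSnd_apply] at hp ⊢
    omega
  · intro y hy hpy z hz hpz hyz
    have hfst := congrArg (fun u => u.1.valMinAbs) hyz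
    have hsnd := congrArg (fun u => u.2.valMinAbs) hyz
    have := valMinAbs_shears hy
    have := valMinAbs_shears hz
    simp only [SameSign, shearFst_apply, shearSnd_apply] at *
    omega

lemma sum_sq_oppositeSign_le (a : ZMod N × ZMod N → ℝ) {t : ℝ} (ht : 0 < t) :
    ∑ z with OppositeSign z, a z ^ 2 ≤
      (t * ∑ z, (a z - a (shearFst _ z)) ^ 2 + (∑ z, a z ^ 2) / t) +
      (t * ∑ z, (a z - a (shearSnd _ z)) ^ 2 + (∑ z, a z ^ 2) / t) +
      2 * ∑ z ∈ (centralWindow N)ᶜ, a z ^ 2 := by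
  rw [← sum_sq_sub_symm a (shearFst _), ← sum_sq_sub_symm a (shearSnd _)]
  refine sum_sq_filter_le_of_pingPong (shearFst _).symm.injective (shearSnd _).symm.injective a
    ?_ ?_ ?_ ht
  · intro z hz hp
    have := valMinAbs_shears hz
    simp only [OppositeSign, shearFst_symm_apply] at hp ⊢
    omega
  · intro z hz hp
    have := valMinAbs_shears hz
    simp only [OppositeSign, shearSnd_symm_apply] at hp ⊢
    omega
  · intro y hy hpy z hz hpz hyz
    have hfst := congrArg (fun u => u.1.valMinAbs) hyz
    have hsnd := congrArg (fun u => u.2.valMinAbs) hyz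
    have := valMinAbs_shears hy
    have := valMinAbs_shears hz
    simp only [OppositeSign, shearFst_symm_apply, shearSnd_symm_apply] at *
    omega

lemma sum_sq_verticalAxis_le (a : ZMod N × ZMod N → ℝ) {t : ℝ} (ht : 0 < t) :
    ∑ z with z.1 = 0 ∧ z.2 ≠ 0, a z ^ 2 ≤ ∑ z with SameSign z, a z ^ 2 +
      (t * ∑ z, (a z - a (shearFst _ z)) ^ 2 + (∑ z, a z ^ 2) / t) +
      ∑ z ∈ (centralWindow N)ᶜ, a z ^ 2 := by
  refine sum_sq_filter_le_of_mapsTo (shearFst _).injective a (fun z hz hq => ?_) ht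
  have := valMinAbs_shears hz
  simp only [SameSign, shearFst_apply, ne_eq, ← ZMod.valMinAbs_eq_zero] at hq ⊢
  omega

lemma sum_sq_horizontalAxis_le (a : ZMod N × ZMod N → ℝ) {t : ℝ} (ht : 0 < t) :
    ∑ z with z.1 ≠ 0 ∧ z.2 = 0, a z ^ 2 ≤ ∑ z with SameSign z, a z ^ 2 +
      (t * ∑ z, (a z - a (shearSnd _ z)) ^ 2 + (∑ z, a z ^ 2) / t) +
      ∑ z ∈ (centralWindow N)ᶜ, a z ^ 2 := by
  refine sum_sq_filter_le_of_mapsTo (shearSnd _).injective a (fun z hz hq => ?_) ht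
  have := valMinAbs_shears hz
  simp only [SameSign, shearSnd_apply, ne_eq, ← ZMod.valMinAbs_eq_zero] at hq ⊢
  omega

lemma sum_sq_le_sum_sq_sectors (a : ZMod N × ZMod N → ℝ) (ha : a 0 = 0) :
    ∑ z, a z ^ 2 ≤ ∑ z with SameSign z, a z ^ 2 + ∑ z with OppositeSign z, a z ^ 2 +
      (∑ z with z.1 = 0 ∧ z.2 ≠ 0, a z ^ 2 + ∑ z with z.1 ≠ 0 ∧ z.2 = 0, a z ^ 2) := by
  simp only [sum_filter, ← sum_add_distrib]
  refine sum_le_sum fun z _ => ?_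
  have hsq := sq_nonneg (a z)
  rcases eq_or_ne z 0 with rfl | hz
  · rw [ha]
    simp
  have hcover : SameSign z ∨ OppositeSign z ∨ (z.1 = 0 ∧ z.2 ≠ 0) ∨ (z.1 ≠ 0 ∧ z.2 = 0) := by
    rw [ne_eq, Prod.ext_iff, Prod.fst_zero, Prod.snd_zero] at hz
    simp only [SameSign, OppositeSign, ne_eq, ← ZMod.valMinAbs_eq_zero] at hz ⊢
    omega
  split_ifs <;> first | linarith | tauto

/-- Ping-pong for the two shears: the quadrants of equal signs are mapped by them into disjoint
parts of themselves, hence carry little mass when `a` is almost invariant; likewise for the other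
two quadrants and the inverse shears, and the axes are pushed into quadrants. -/
lemma sum_sq_le_of_shears (a : ZMod N × ZMod N → ℝ) (ha : a 0 = 0) :
    ∑ z, a z ^ 2 ≤
      200 * (∑ z, (a z - a (shearFst _ z)) ^ 2 + ∑ z, (a z - a (shearSnd _ z)) ^ 2) +
      20 * ∑ z ∈ (centralWindow N)ᶜ, a z ^ 2 := by
  have ht : (0 : ℝ) < 20 := by norm_num
  linarith [sum_sq_le_sum_sq_sectors a ha, sum_sq_sameSign_le a ht, sum_sq_oppositeSign_le a ht,
    sum_sq_verticalAxis_le a ht, sum_sq_horizontalAxis_le a ht]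

end PingPong

noncomputable section

section Fourier

variable {R : Type*} [CommRing R] [Fintype R]

/-- The unnormalised Fourier transform on `R²`, frequencies being identified with points of `R²`
through the standard bilinear form and the additive character `ψ`. -/
def planeFourier (ψ : AddChar R ℂ) (f : R × R → ℂ) (z : R × R) : ℂ :=
  ∑ x, f x * ψ (z.1 * x.1 + z.2 * x.2)

lemma planeFourier_sub (ψ : AddChar R ℂ) (f g : R × R → ℂ) (z : R × R) :
    planeFourier ψ (fun x => f x - g x) z = planeFourier ψ f z - planeFourier ψ g z := by
  simp only [planeFourier, sub_mul, sum_sub_distrib]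

lemma planeFourier_zero_right (ψ : AddChar R ℂ) (f : R × R → ℂ) :
    planeFourier ψ f 0 = ∑ x, f x := by
  simp [planeFourier]

lemma planeFourier_comp_addRight (ψ : AddChar R ℂ) (f : R × R → ℂ) (a z : R × R) :
    planeFourier ψ (fun x => f (x + a)) z = ψ (-(z.1 * a.1 + z.2 * a.2)) * planeFourier ψ f z := by
  symm
  rw [planeFourier, planeFourier, mul_sum, ← Equiv.sum_comp (Equiv.addRight a)]
  refine sum_congr rfl fun x _ => ?_
  rw [mul_left_comm, ← AddChar.map_add_eq_mul, Equiv.coe_addRight, Prod.fst_add, Prod.snd_add]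
  congr 2
  ring

lemma planeFourier_comp_shearFst (ψ : AddChar R ℂ) (f : R × R → ℂ) (z : R × R) :
    planeFourier ψ (fun x => f (shearFst R x)) z = planeFourier ψ f ((shearSnd R).symm z) := by
  symm
  rw [planeFourier, planeFourier, ← Equiv.sum_comp (shearFst R)]
  refine sum_congr rfl fun x _ => ?_
  simp only [shearFst_apply, shearSnd_symm_apply]
  congr 2
  ring

lemma planeFourier_comp_shearSnd (ψ : AddChar R ℂ) (f : R × R → ℂ) (z : R × R) :
    planeFourier ψ (fun x => f (shearSnd R x)) z = planeFourier ψ f ((shearFst R).symm z) := by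
  symm
  rw [planeFourier, planeFourier, ← Equiv.sum_comp (shearSnd R)]
  refine sum_congr rfl fun x _ => ?_
  simp only [shearSnd_apply, shearFst_symm_apply]
  congr 2
  ring

lemma sq_norm_sub_norm_le {E : Type*} [SeminormedAddCommGroup E] (u v : E) :
    (‖u‖ - ‖v‖) ^ 2 ≤ ‖u - v‖ ^ 2 :=
  sq_le_sq.2 ((abs_norm_sub_norm_le u v).trans (le_abs_self _))

lemma sum_sq_norm_planeFourier_sub_shearFst_le (ψ : AddChar R ℂ) (f : R × R → ℂ) :
    ∑ z, (‖planeFourier ψ f z‖ - ‖planeFourier ψ f (shearFst R z)‖) ^ 2 ≤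
      ∑ z, ‖planeFourier ψ f z - planeFourier ψ (fun x => f (shearSnd R x)) z‖ ^ 2 := by
  rw [← sum_sq_sub_symm fun z => ‖planeFourier ψ f z‖]
  simp only [planeFourier_comp_shearSnd]
  exact sum_le_sum fun z _ => sq_norm_sub_norm_le _ _

lemma sum_sq_norm_planeFourier_sub_shearSnd_le (ψ : AddChar R ℂ) (f : R × R → ℂ) :
    ∑ z, (‖planeFourier ψ f z‖ - ‖planeFourier ψ f (shearSnd R z)‖) ^ 2 ≤
      ∑ z, ‖planeFourier ψ f z - planeFourier ψ (fun x => f (shearFst R x)) z‖ ^ 2 := by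
  rw [← sum_sq_sub_symm fun z => ‖planeFourier ψ f z‖]
  simp only [planeFourier_comp_shearFst]
  exact sum_le_sum fun z _ => sq_norm_sub_norm_le _ _

variable {ψ : AddChar R ℂ}

lemma sum_char_mul_add_mul [DecidableEq R] (hψ : ψ.IsPrimitive) (x : R × R) :
    ∑ z : R × R, ψ (z.1 * x.1 + z.2 * x.2) = if x = 0 then (Fintype.card R : ℂ) ^ 2 else 0 := by
  simp only [Fintype.sum_prod_type, AddChar.map_add_eq_mul, ← mul_sum, ← sum_mul,
    AddChar.sum_mulShift _ hψ, Prod.ext_iff, Prod.fst_zero, Prod.snd_zero]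
  split_ifs <;> simp_all [sq]

lemma sum_norm_sq_planeFourier (hψ : ψ.IsPrimitive) (f : R × R → ℂ) :
    ∑ z, ‖planeFourier ψ f z‖ ^ 2 = (Fintype.card R : ℝ) ^ 2 * ∑ x, ‖f x‖ ^ 2 := by
  classical
  have hexpand (z : R × R) : planeFourier ψ f z * (starRingEnd ℂ) (planeFourier ψ f z) =
      ∑ x, ∑ y, f x * (starRingEnd ℂ) (f y) * ψ (z.1 * (x - y).1 + z.2 * (x - y).2) := by
    simp only [planeFourier, map_sum, map_mul, ← AddChar.map_neg_eq_conj, sum_mul_sum]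
    refine sum_congr rfl fun x _ => sum_congr rfl fun y _ => ?_
    rw [mul_mul_mul_comm, ← AddChar.map_add_eq_mul, Prod.fst_sub, Prod.snd_sub]
    congr 2
    ring
  have hcomplex : ∑ z, planeFourier ψ f z * (starRingEnd ℂ) (planeFourier ψ f z) =
      (Fintype.card R : ℂ) ^ 2 * ∑ x, f x * (starRingEnd ℂ) (f x) := by
    simp only [hexpand]
    rw [sum_comm, mul_sum]
    refine sum_congr rfl fun x _ => ?_
    rw [sum_comm]
    simp only [← mul_sum, sum_char_mul_add_mul hψ, sub_eq_zero, mul_ite, mul_zero, sum_ite_eq,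
      mem_univ, if_true]
    ring
  simp only [Complex.mul_conj'] at hcomplex
  exact_mod_cast hcomplex

lemma sum_norm_sq_planeFourier_sub_comp (hψ : ψ.IsPrimitive) (f : R × R → ℝ)
    (σ : R × R → R × R) :
    ∑ z, ‖planeFourier ψ (fun x => (f x : ℂ)) z -
        planeFourier ψ (fun x => (f (σ x) : ℂ)) z‖ ^ 2 =
      (Fintype.card R : ℝ) ^ 2 * ∑ x, (f x - f (σ x)) ^ 2 := by
  simp only [← planeFourier_sub, sum_norm_sq_planeFourier hψ, ← Complex.ofReal_sub,
    Complex.norm_real, Real.norm_eq_abs, sq_abs]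

end Fourier

section PlanePoincare

variable {N : ℕ} [NeZero N]

lemma one_le_norm_one_sub_stdAddChar {t : ZMod N} (ht : N ≤ 4 * |t.valMinAbs|) :
    1 ≤ ‖1 - ZMod.stdAddChar t‖ := by
  have hN : (0 : ℝ) < N := Nat.cast_pos.2 (NeZero.pos N)
  have hangle : (2 * Real.pi * Complex.I * (t.valMinAbs : ℂ) / N : ℂ) =
      ((2 * Real.pi * t.valMinAbs / N : ℝ) : ℂ) * Complex.I := by
    push_cast
    ring
  have habs : |2 * Real.pi * t.valMinAbs / N| = 2 * Real.pi * |(t.valMinAbs : ℝ)| / N := by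
    rw [abs_div, abs_mul, abs_of_pos Real.two_pi_pos, abs_of_pos hN]
  have hlower : (N : ℝ) ≤ 4 * |(t.valMinAbs : ℝ)| := by exact_mod_cast ht
  have hupper : 2 * |(t.valMinAbs : ℝ)| ≤ N := by
    have := ZMod.valMinAbs_mem_Ioc t
    have : 2 * |t.valMinAbs| ≤ N := by grind
    exact_mod_cast this
  have hcos : Real.cos (2 * Real.pi * |(t.valMinAbs : ℝ)| / N) ≤ 0 := by
    refine Real.cos_nonpos_of_pi_div_two_le_of_le ?_ ?_
    · rw [le_div_iff₀ hN]
      nlinarith [Real.pi_pos]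
    · rw [div_le_iff₀ hN]
      nlinarith [Real.pi_pos]
  have hre : (ZMod.stdAddChar t).re ≤ 0 := by
    rwa [← ZMod.coe_valMinAbs t, ZMod.stdAddChar_coe, hangle, Complex.exp_ofReal_mul_I_re,
      ← Real.cos_abs, habs]
  calc (1 : ℝ) ≤ (1 - ZMod.stdAddChar t).re := by simpa using hre
    _ ≤ ‖1 - ZMod.stdAddChar t‖ := Complex.re_le_norm _

lemma norm_sq_le_norm_sq_sub_stdAddChar_mul {t : ZMod N} (ht : N ≤ 4 * |t.valMinAbs|) (u : ℂ) :
    ‖u‖ ^ 2 ≤ ‖u - ZMod.stdAddChar (-t) * u‖ ^ 2 := by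
  have hsymm : ‖1 - ZMod.stdAddChar (-t)‖ = ‖1 - ZMod.stdAddChar t‖ := by
    rw [AddChar.map_neg_eq_conj, ← map_one (starRingEnd ℂ), ← map_sub, RCLike.norm_conj, map_one]
  rw [← one_sub_mul, norm_mul, hsymm]
  gcongr
  exact le_mul_of_one_le_left (norm_nonneg u) (one_le_norm_one_sub_stdAddChar ht)

lemma sum_compl_centralWindow_norm_sq_planeFourier_le (f : ZMod N × ZMod N → ℂ) :
    ∑ z ∈ (centralWindow N)ᶜ, ‖planeFourier ZMod.stdAddChar f z‖ ^ 2 ≤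
      ∑ z, ‖planeFourier ZMod.stdAddChar f z -
        planeFourier ZMod.stdAddChar (fun x => f (x + (1, 0))) z‖ ^ 2 +
      ∑ z, ‖planeFourier ZMod.stdAddChar f z -
        planeFourier ZMod.stdAddChar (fun x => f (x + (0, 1))) z‖ ^ 2 := by
  simp only [planeFourier_comp_addRight, mul_one, mul_zero, add_zero, zero_add,
    ← sum_add_distrib]
  refine (sum_le_sum fun z hz => ?_).trans
    (sum_le_univ_sum_of_nonneg fun z => by positivity)
  rw [mem_compl, mem_centralWindow, not_and_or, not_lt, not_lt] at hz
  rcases hz with hz | hz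
  · exact le_add_of_le_of_nonneg (norm_sq_le_norm_sq_sub_stdAddChar_mul hz _) (by positivity)
  · exact le_add_of_nonneg_of_le (by positivity) (norm_sq_le_norm_sq_sub_stdAddChar_mul hz _)

/-- The two unit translations and the two shears of `R²`. -/
def torusMove (R : Type*) [Ring R] : Fin 4 → Equiv.Perm (R × R) :=
  ![Equiv.addRight (1, 0), Equiv.addRight (0, 1), shearFst R, shearSnd R]

/-- On the frequency side the shears act again by shears, and the translations by multiplication
with characters which are far from `1` off the central window. -/
lemma sum_sq_le_of_sum_eq_zero {f : ZMod N × ZMod N → ℝ} (hf : ∑ x, f x = 0) :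
    ∑ x, f x ^ 2 ≤ 200 * ∑ i, ∑ x, (f x - f (torusMove (ZMod N) i x)) ^ 2 := by
  have hψ := ZMod.isPrimitive_stdAddChar N
  have hN : (0 : ℝ) < (N : ℝ) ^ 2 := by
    have := NeZero.pos N
    positivity
  have hzero : ‖planeFourier (ZMod.stdAddChar (N := N)) (fun x => (f x : ℂ)) 0‖ = 0 := by
    rw [planeFourier_zero_right, norm_eq_zero]
    exact_mod_cast hf
  have hparseval := sum_norm_sq_planeFourier hψ fun x => (f x : ℂ)
  have hpingPong := sum_sq_le_of_shears (fun z => ‖planeFourier _ _ z‖) hzero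
  have hfst := sum_sq_norm_planeFourier_sub_shearFst_le (ZMod.stdAddChar (N := N))
    fun x => (f x : ℂ)
  have hsnd := sum_sq_norm_planeFourier_sub_shearSnd_le (ZMod.stdAddChar (N := N))
    fun x => (f x : ℂ)
  have hcompl := sum_compl_centralWindow_norm_sq_planeFourier_le fun x => (f x : ℂ)
  simp only [sum_norm_sq_planeFourier_sub_comp hψ f, ZMod.card, Complex.norm_real,
    Real.norm_eq_abs, sq_abs] at hparseval hfst hsnd hcompl
  have hnonneg (σ : ZMod N × ZMod N → ZMod N × ZMod N) :
      0 ≤ (N : ℝ) ^ 2 * ∑ x, (f x - f (σ x)) ^ 2 := by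
    positivity
  rw [Fin.sum_univ_four]
  refine le_of_mul_le_mul_left ?_ hN
  simp only [torusMove, Matrix.cons_val, Equiv.coe_addRight]
  linarith [hnonneg (· + (1, 0)), hnonneg (· + (0, 1))]

end PlanePoincare

section SignedSqrt

/-- The signed square root, an odd continuous bijection of `ℝ` which turns `L²` into `L¹`. -/
def signedSqrt (t : ℝ) : ℝ := √t - √(-t)

lemma continuous_signedSqrt : Continuous signedSqrt := by
  unfold signedSqrt
  fun_prop

lemma signedSqrt_nonneg {t : ℝ} (ht : 0 ≤ t) : 0 ≤ signedSqrt t := by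
  simp [signedSqrt, Real.sqrt_eq_zero_of_nonpos (neg_nonpos.2 ht)]

lemma signedSqrt_nonpos {t : ℝ} (ht : t ≤ 0) : signedSqrt t ≤ 0 := by
  simp [signedSqrt, Real.sqrt_eq_zero_of_nonpos ht]

lemma sq_signedSqrt (t : ℝ) : signedSqrt t ^ 2 = |t| := by
  rcases le_total 0 t with ht | ht
  · simp [signedSqrt, Real.sqrt_eq_zero_of_nonpos (neg_nonpos.2 ht), abs_of_nonneg, ht]
  · simp [signedSqrt, Real.sqrt_eq_zero_of_nonpos ht, abs_of_nonpos, ht]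

lemma sq_sqrt_sub_sqrt_le {s t : ℝ} (hts : t ≤ s) : (√s - √t) ^ 2 ≤ max s 0 - max t 0 := by
  rw [← Real.sq_sqrt', ← Real.sq_sqrt']
  nlinarith [Real.sqrt_nonneg t, Real.sqrt_le_sqrt hts]

lemma sq_signedSqrt_sub_signedSqrt_le (s t : ℝ) :
    (signedSqrt s - signedSqrt t) ^ 2 ≤ 2 * |s - t| := by
  wlog hts : t ≤ s generalizing s t
  · rw [sub_sq_comm, abs_sub_comm]
    exact this t s (le_of_not_ge hts)
  calc (signedSqrt s - signedSqrt t) ^ 2 = ((√s - √t) + (√(-t) - √(-s))) ^ 2 := by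
        rw [signedSqrt, signedSqrt]
        ring
    _ ≤ 2 * ((√s - √t) ^ 2 + (√(-t) - √(-s)) ^ 2) := add_sq_le
    _ ≤ 2 * ((max s 0 - max t 0) + (max (-t) 0 - max (-s) 0)) := by
        gcongr
        exacts [sq_sqrt_sub_sqrt_le hts, sq_sqrt_sub_sqrt_le (neg_le_neg hts)]
    _ = 2 * ((max s 0 - max (-s) 0) - (max t 0 - max (-t) 0)) := by ring
    _ = 2 * |s - t| := by
        rw [max_zero_sub_max_neg_zero_eq_self, max_zero_sub_max_neg_zero_eq_self,
          abs_of_nonneg (sub_nonneg.2 hts)]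

end SignedSqrt

section Coboundary

variable {G H ι : Type*} [Fintype ι]

/-- The sum of the coboundaries `g i ∘ (σ i)⁻¹ - g i`. -/
def coboundary (σ : ι → Equiv.Perm G) : (ι → G → ℝ) →ₗ[ℝ] G → ℝ :=
  ∑ i, (LinearMap.funLeft ℝ ℝ (σ i).symm - LinearMap.id) ∘ₗ LinearMap.proj i

lemma coboundary_apply (σ : ι → Equiv.Perm G) (g : ι → G → ℝ) (x : G) :
    coboundary σ g x = ∑ i, (g i ((σ i).symm x) - g i x) := by
  simp [coboundary, LinearMap.funLeft_apply]

variable [Fintype G] [Fintype H]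

lemma exists_sum_signedSqrt_sub_eq_zero (f : G → ℝ) : ∃ c, ∑ x, signedSqrt (f x - c) = 0 := by
  have hcont : Continuous fun c => ∑ x, signedSqrt (f x - c) :=
    continuous_finsetSum _ fun x _ => continuous_signedSqrt.comp (by fun_prop)
  have hbound (x : G) : |f x| ≤ ∑ x, |f x| :=
    single_le_sum (fun x _ => abs_nonneg (f x)) (mem_univ x)
  refine mem_range_of_exists_le_of_exists_ge hcont ⟨∑ x, |f x|, ?_⟩ ⟨-∑ x, |f x|, ?_⟩
  · exact sum_nonpos fun x _ => signedSqrt_nonpos (by linarith [abs_le.1 (hbound x)])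
  · exact sum_nonneg fun x _ => signedSqrt_nonneg (by linarith [abs_le.1 (hbound x)])

lemma exists_sum_abs_sub_le_of_sum_sq_le {σ : ι → Equiv.Perm G} {C : ℝ} (hC : 0 ≤ C)
    (hσ : ∀ f : G → ℝ, ∑ x, f x = 0 → ∑ x, f x ^ 2 ≤ C * ∑ i, ∑ x, (f x - f (σ i x)) ^ 2)
    (f : G → ℝ) :
    ∃ c, ∑ x, |f x - c| ≤ 2 * C * ∑ i, ∑ x, |f x - f (σ i x)| := by
  obtain ⟨c, hc⟩ := exists_sum_signedSqrt_sub_eq_zero f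
  refine ⟨c, ?_⟩
  calc ∑ x, |f x - c| = ∑ x, signedSqrt (f x - c) ^ 2 := by simp only [sq_signedSqrt]
    _ ≤ C * ∑ i, ∑ x, (signedSqrt (f x - c) - signedSqrt (f (σ i x) - c)) ^ 2 := hσ _ hc
    _ ≤ C * ∑ i, ∑ x, 2 * |(f x - c) - (f (σ i x) - c)| := by
        gcongr
        exact sq_signedSqrt_sub_signedSqrt_le _ _
    _ = 2 * C * ∑ i, ∑ x, |f x - f (σ i x)| := by
        simp only [sub_sub_sub_cancel_right, ← mul_sum]
        ring

lemma sum_coboundary_mul (σ : ι → Equiv.Perm G) (g : ι → G → ℝ) (p : G → ℝ) :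
    ∑ x, coboundary σ g x * p x = ∑ i, ∑ x, g i x * (p (σ i x) - p x) := by
  simp only [coboundary_apply, sum_mul]
  rw [sum_comm]
  refine sum_congr rfl fun i _ => ?_
  simp only [sub_mul, mul_sub, sum_sub_distrib]
  rw [← Equiv.sum_comp (σ i) fun x => g i ((σ i).symm x) * p x]
  simp only [Equiv.symm_apply_apply]

/-- The moves `σ` have *bounded coboundaries* with constant `C` if each function of mean zero
bounded by `1` is a sum of coboundaries of functions bounded by `C`. -/
def HasBoundedCoboundaries (σ : ι → Equiv.Perm G) (C : ℝ) : Prop :=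
  ∀ F : G → ℝ, (∀ x, |F x| ≤ 1) → ∑ x, F x = 0 →
    ∃ g : ι → G → ℝ, (∀ i x, |g i x| ≤ C) ∧ coboundary σ g = F

lemma sum_mul_le_sum_abs_sub {F : G → ℝ} (hF : ∀ x, |F x| ≤ 1) (hsum : ∑ x, F x = 0)
    (p : G → ℝ) (c : ℝ) : ∑ x, F x * p x ≤ ∑ x, |p x - c| := calc
  ∑ x, F x * p x = ∑ x, F x * (p x - c) := by
    simp only [mul_sub, sum_sub_distrib, ← sum_mul, hsum, zero_mul, sub_zero]
  _ ≤ ∑ x, |p x - c| := by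
    refine sum_le_sum fun x _ => (le_abs_self _).trans ?_
    rw [abs_mul]
    exact mul_le_of_le_one_left (abs_nonneg _) (hF x)

/-- Hahn-Banach separation: the transpose of `coboundary σ` is the difference operator
`p ↦ (p ∘ σ i - p)ᵢ`, which is bounded below modulo constants in `L¹`. -/
lemma HasBoundedCoboundaries.of_poincare {σ : ι → Equiv.Perm G} {C : ℝ} (hC : 0 ≤ C)
    (hσ : ∀ p : G → ℝ, ∃ c, ∑ x, |p x - c| ≤ C * ∑ i, ∑ x, |p x - p (σ i x)|) :
    HasBoundedCoboundaries σ C := by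
  classical
  intro F hF hsum
  set K : Set (ι → G → ℝ) := Set.univ.pi fun _ => Set.univ.pi fun _ => Set.Icc (-C) C
  have hcompact : IsCompact K := isCompact_univ_pi fun _ => isCompact_univ_pi fun _ => isCompact_Icc
  have hconvex : Convex ℝ K := convex_pi fun _ _ => convex_pi fun _ _ => convex_Icc _ _
  suffices hmem : F ∈ coboundary σ '' K by
    obtain ⟨g, hg, rfl⟩ := hmem
    exact ⟨g, fun i x => abs_le.2 (hg i trivial x trivial), rfl⟩
  by_contra hmem
  obtain ⟨φ, u, hlt, hgt⟩ := geometric_hahn_banach_closed_point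
    (hconvex.linear_image (coboundary σ))
    (hcompact.image (coboundary σ).continuous_of_finiteDimensional).isClosed hmem
  set p : G → ℝ := fun x => φ (Pi.single x 1)
  have hφ (h : G → ℝ) : φ h = ∑ x, h x * p x := by
    conv_lhs => rw [pi_eq_sum_univ' h]
    simp only [map_sum, map_smul, smul_eq_mul, p]
  set g : ι → G → ℝ := fun i x => C * SignType.sign (p (σ i x) - p x)
  have hgK : g ∈ K := by
    intro i _ x _
    simp only [g]
    rcases SignType.sign (p (σ i x) - p x) with _ | _ | _ <;> simp [hC]
  have hvalue : φ (coboundary σ g) = C * ∑ i, ∑ x, |p x - p (σ i x)| := by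
    simp only [hφ, sum_coboundary_mul, g, mul_assoc, sign_mul_self, ← mul_sum, abs_sub_comm]
  obtain ⟨c, hc⟩ := hσ p
  linarith [hlt _ ⟨g, hgK, rfl⟩, hφ F, sum_mul_le_sum_abs_sub hF hsum p c]

lemma HasBoundedCoboundaries.of_equiv {σ : ι → Equiv.Perm G} {τ : ι → Equiv.Perm H} {C : ℝ}
    (hσ : HasBoundedCoboundaries σ C) (e : G ≃ H) (he : ∀ i x, e (σ i x) = τ i (e x)) :
    HasBoundedCoboundaries τ C := by
  intro F hF hsum
  obtain ⟨g, hg, hgF⟩ := hσ (F ∘ e) (fun x => hF _) (by rw [← hsum, ← e.sum_comp]; rfl)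
  refine ⟨fun i y => g i (e.symm y), fun i y => hg _ _, funext fun y => ?_⟩
  have hsymm (i : ι) : e.symm ((τ i).symm y) = (σ i).symm (e.symm y) := by
    rw [Equiv.eq_symm_apply, ← e.apply_eq_iff_eq, he]
    simp
  have hy := congrFun hgF (e.symm y)
  rw [coboundary_apply, Function.comp_apply, e.apply_symm_apply] at hy
  simp only [coboundary_apply, hsymm, hy]

end Coboundary

section Torus

lemma hasBoundedCoboundaries_torusMove (N : ℕ) [NeZero N] :
    HasBoundedCoboundaries (torusMove (ZMod N)) 400 := by
  refine .of_poincare (by norm_num) fun p => ?_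
  obtain ⟨c, hc⟩ := exists_sum_abs_sub_le_of_sum_sq_le (by norm_num)
    (fun f hf => sum_sq_le_of_sum_eq_zero (N := N) hf) p
  exact ⟨c, by linarith⟩

lemma torusMove_map {R S : Type*} [Ring R] [Ring S] (f : R →+* S) (i : Fin 4) (x : R × R) :
    Prod.map f f (torusMove R i x) = torusMove S i (Prod.map f f x) := by
  fin_cases i <;> simp [torusMove, Prod.ext_iff]

lemma hasBoundedCoboundaries_torusMove_prod {p q : ℕ} [NeZero p] [NeZero q] (hpq : p.Coprime q) :
    HasBoundedCoboundaries
      (fun i => (torusMove (ZMod p) i).prodCongr (torusMove (ZMod q) i)) 400 := by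
  have : NeZero (p * q) := ⟨mul_ne_zero (NeZero.ne p) (NeZero.ne q)⟩
  let crt := ZMod.chineseRemainder hpq
  refine (hasBoundedCoboundaries_torusMove (p * q)).of_equiv
    ((crt.toEquiv.prodCongr crt.toEquiv).trans (Equiv.prodProdProdComm _ _ _ _)) fun i x => ?_
  exact Prod.ext (torusMove_map ((RingHom.fst _ _).comp crt.toRingHom) i x)
    (torusMove_map ((RingHom.snd _ _).comp crt.toRingHom) i x)

end Torus

section CodingSystem

variable {κ ι : Type*} [Fintype ι] {Q : κ → Type*} (σ : ∀ k, ι → Equiv.Perm (Q k))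
  (s : ∀ k, Q k → ℝ) (S : Set κ)

/-- Elements of an algebra which code the set `S`: the blocks `U k` indexed by `S` act from the left
and the blocks `V m` indexed by its complement from the right, both bounded by `K`. When two systems
in the same algebra, coding `S` and `T`, have close `x`, `y` and `L`, then a block `k ∈ S \ T`
forces the element `w` of the second one to be small. -/
structure CodingSystem (A : Type*) [NonUnitalNormedRing A] [NormedSpace ℂ A] where
  x : ι → A
  y : A
  L : A
  w : A
  U : ∀ k : S, Q k → A
  V : ∀ m : ↥Sᶜ, Q m → A
  K : ℝ
  norm_U_le : ∀ k j, ‖U k j‖ ≤ K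
  norm_V_le : ∀ m g, ‖V m g‖ ≤ K
  sum_U_mul_x : ∀ k j, ∑ i, U k ((σ k i).symm j) * x i - U k j * y = (s k j : ℂ) • L
  sum_x_mul_V : ∀ m g, ∑ i, x i * V m (σ m i g) = y * V m g
  L_mul_V : ∀ m g, L * V m g = (s m g : ℂ) • w
  w_ne_zero : w ≠ 0

namespace CodingSystem

variable {σ s S} {T : Set κ} {A B : Type*} [NonUnitalNormedRing A] [NormedSpace ℂ A]
  [NonUnitalNormedRing B] [NormedSpace ℂ B]

/-- The image of a coding system under a continuous injective homomorphism. -/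
def map (c : CodingSystem σ s S A) (φ : A →ₙₐ[ℂ] B) (hinj : Function.Injective φ)
    (hcont : Continuous φ) : CodingSystem σ s S B :=
  let φL : A →L[ℂ] B := ⟨(φ : A →ₗ[ℂ] B), hcont⟩
  { x := fun i => φ (c.x i)
    y := φ c.y
    L := φ c.L
    w := φ c.w
    U := fun k j => φ (c.U k j)
    V := fun m g => φ (c.V m g)
    K := ‖φL‖ * c.K
    norm_U_le := fun k j => φL.le_opNorm_of_le (c.norm_U_le k j)
    norm_V_le := fun m g => φL.le_opNorm_of_le (c.norm_V_le m g)
    sum_U_mul_x := fun k j => by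
      simpa only [map_sub, map_sum, map_mul, map_smul] using congrArg φ (c.sum_U_mul_x k j)
    sum_x_mul_V := fun m g => by
      simpa only [map_sum, map_mul] using congrArg φ (c.sum_x_mul_V m g)
    L_mul_V := fun m g => by
      simpa only [map_mul, map_smul] using congrArg φ (c.L_mul_V m g)
    w_ne_zero := (map_ne_zero_iff φ hinj).2 c.w_ne_zero }

/-- The elements of the algebra which occur in a coding system. -/
def elements (c : CodingSystem σ s S A) : Set A :=
  Set.range c.x ∪ {c.y, c.L, c.w} ∪ Set.range (fun t : Σ k : S, Q k => c.U t.1 t.2) ∪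
    Set.range (fun t : Σ m : ↥Sᶜ, Q m => c.V t.1 t.2)

lemma countable_elements [Countable κ] [∀ k, Countable (Q k)] (c : CodingSystem σ s S A) :
    c.elements.Countable :=
  (((Set.countable_range _).union (Set.toFinite _).countable).union
    (Set.countable_range _)).union (Set.countable_range _)

lemma nonempty_of_elements_subset_range (c : CodingSystem σ s S B) (φ : A →ₙₐ[ℂ] B)
    (hφ : ∀ a, ‖φ a‖ = ‖a‖) (hc : c.elements ⊆ Set.range φ) :
    Nonempty (CodingSystem σ s S A) := by
  have hinj : Function.Injective φ := (AddMonoidHomClass.isometry_of_norm φ hφ).injective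
  have hx (i : ι) : ∃ a, φ a = c.x i := hc (by simp [elements])
  obtain ⟨y, hy⟩ : ∃ a, φ a = c.y := hc (by simp [elements])
  obtain ⟨L, hL⟩ : ∃ a, φ a = c.L := hc (by simp [elements])
  obtain ⟨w, hw⟩ : ∃ a, φ a = c.w := hc (by simp [elements])
  have hU (k : S) (j : Q k) : ∃ a, φ a = c.U k j := hc (Or.inl (Or.inr ⟨⟨k, j⟩, rfl⟩))
  have hV (m : ↥Sᶜ) (g : Q m) : ∃ a, φ a = c.V m g := hc (Or.inr ⟨⟨m, g⟩, rfl⟩)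
  choose x hx using hx
  choose U hU using hU
  choose V hV using hV
  exact ⟨{
    x, y, L, w, U, V
    K := c.K
    norm_U_le := fun k j => by rw [← hφ, hU]; exact c.norm_U_le k j
    norm_V_le := fun m g => by rw [← hφ, hV]; exact c.norm_V_le m g
    sum_U_mul_x := fun k j => hinj <| by
      simpa only [map_sub, map_sum, map_mul, map_smul, hU, hx, hy, hL] using c.sum_U_mul_x k j
    sum_x_mul_V := fun m g => hinj <| by
      simpa only [map_sum, map_mul, hx, hy, hV] using c.sum_x_mul_V m g
    L_mul_V := fun m g => hinj <| by
      simpa only [map_mul, map_smul, hL, hV, hw] using c.L_mul_V m g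
    w_ne_zero := fun h => c.w_ne_zero (by rw [← hw, h, map_zero]) }⟩

section Distance

variable [∀ k, Fintype (Q k)] {k : κ}

lemma norm_sum_smul_mul_V_le (c' : CodingSystem σ s T B) (hs : ∀ j, |s k j| ≤ 1) (hT : k ∉ T)
    (b : B) :
    ‖∑ j, (s k j : ℂ) • (b * c'.V ⟨k, hT⟩ j)‖ ≤ Fintype.card (Q k) * (c'.K * ‖b‖) := by
  rw [← nsmul_eq_mul, mul_comm c'.K]
  refine (norm_sum_le _ _).trans (sum_le_card_nsmul _ _ _ fun j _ => ?_)
  rw [norm_smul, Complex.norm_real]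
  exact (mul_le_of_le_one_left (norm_nonneg _) (hs j)).trans
    (norm_mul_le_of_le le_rfl (c'.norm_V_le ⟨k, hT⟩ j))

lemma card_mul_norm_w_le (c' : CodingSystem σ s T B)
    (hs : Fintype.card (Q k) ≤ 2 * ∑ j, s k j ^ 2) (hT : k ∉ T) :
    Fintype.card (Q k) * ‖c'.w‖ ≤ 2 * ‖∑ j, (s k j : ℂ) • (c'.L * c'.V ⟨k, hT⟩ j)‖ := by
  have hsum : ∑ j, (s k j : ℂ) • (c'.L * c'.V ⟨k, hT⟩ j) =
      ((∑ j, s k j ^ 2 : ℝ) : ℂ) • c'.w := by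
    simp only [c'.L_mul_V, smul_smul, ← sum_smul, Complex.ofReal_sum, Complex.ofReal_mul,
      sq]
  have hnonneg : 0 ≤ ∑ j, s k j ^ 2 := by positivity
  rw [hsum, norm_smul, Complex.norm_real, Real.norm_of_nonneg hnonneg, ← mul_assoc]
  gcongr

variable [IsScalarTower ℂ B B] (c : CodingSystem σ s S B) (c' : CodingSystem σ s T B)

lemma sum_smul_L_mul_V (hS : k ∈ S) (hT : k ∉ T) :
    ∑ j, (s k j : ℂ) • (c.L * c'.V ⟨k, hT⟩ j) =
      ∑ h, c.U ⟨k, hS⟩ h *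
        (∑ i, (c.x i - c'.x i) * c'.V ⟨k, hT⟩ (σ k i h) - (c.y - c'.y) * c'.V ⟨k, hT⟩ h) := by
  set U := c.U ⟨k, hS⟩
  set V := c'.V ⟨k, hT⟩ with hV
  have hshift (i : ι) : ∑ j, U ((σ k i).symm j) * (c.x i * V j) =
      ∑ h, U h * (c.x i * V (σ k i h)) := by
    rw [← Equiv.sum_comp (σ k i)]
    simp only [Equiv.symm_apply_apply]
  calc ∑ j, (s k j : ℂ) • (c.L * V j)
      = ∑ j, (∑ i, U ((σ k i).symm j) * c.x i - U j * c.y) * V j := by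
        refine sum_congr rfl fun j _ => ?_
        rw [← smul_mul_assoc, c.sum_U_mul_x ⟨k, hS⟩ j]
    _ = ∑ h, U h * (∑ i, c.x i * V (σ k i h) - c.y * V h) := by
        simp only [sub_mul, mul_sub, sum_mul, mul_sum, sum_sub_distrib, mul_assoc]
        rw [sum_comm, sum_comm (t := univ (α := ι))]
        simp only [hshift]
    _ = _ := by
        refine sum_congr rfl fun h _ => ?_
        simp only [sub_mul, sum_sub_distrib, hV, c'.sum_x_mul_V ⟨k, hT⟩ h]
        congr 1
        abel

lemma norm_sum_smul_L_mul_V_le (hS : k ∈ S) (hT : k ∉ T) :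
    ‖∑ j, (s k j : ℂ) • (c.L * c'.V ⟨k, hT⟩ j)‖ ≤
      Fintype.card (Q k) * (c.K * c'.K * (∑ i, ‖c.x i - c'.x i‖ + ‖c.y - c'.y‖)) := by
  have hU := c.norm_U_le ⟨k, hS⟩
  have hV := c'.norm_V_le ⟨k, hT⟩
  have hinner (h : Q k) :
      ‖∑ i, (c.x i - c'.x i) * c'.V ⟨k, hT⟩ (σ k i h) - (c.y - c'.y) * c'.V ⟨k, hT⟩ h‖ ≤
        c'.K * (∑ i, ‖c.x i - c'.x i‖ + ‖c.y - c'.y‖) := by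
    rw [mul_comm, add_mul, sum_mul]
    exact norm_sub_le_of_le (norm_sum_le_of_le _ fun i _ => norm_mul_le_of_le le_rfl (hV _))
      (norm_mul_le_of_le le_rfl (hV _))
  rw [sum_smul_L_mul_V c c' hS hT, ← nsmul_eq_mul, mul_assoc]
  exact (norm_sum_le _ _).trans <|
    sum_le_card_nsmul _ _ _ fun h _ => norm_mul_le_of_le (hU h) (hinner h)

/-- `∑ j, s k j • c.L * V j` is small since it telescopes up to `c.x - c'.x` and `c.y - c'.y`,
whereas `∑ j, s k j • c'.L * V j` is a large multiple of `c'.w`. -/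
lemma norm_w_le [Nonempty (Q k)] (hbound : ∀ j, |s k j| ≤ 1)
    (hcard : Fintype.card (Q k) ≤ 2 * ∑ j, s k j ^ 2) (hS : k ∈ S) (hT : k ∉ T) :
    ‖c'.w‖ ≤ 2 * (c.K * c'.K * (∑ i, ‖c.x i - c'.x i‖ + ‖c.y - c'.y‖) +
      c'.K * ‖c.L - c'.L‖) := by
  have hpos : (0 : ℝ) < Fintype.card (Q k) := by exact_mod_cast Fintype.card_pos
  have hsplit : ∑ j, (s k j : ℂ) • (c'.L * c'.V ⟨k, hT⟩ j) =
      ∑ j, (s k j : ℂ) • (c.L * c'.V ⟨k, hT⟩ j) -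
        ∑ j, (s k j : ℂ) • ((c.L - c'.L) * c'.V ⟨k, hT⟩ j) := by
    simp only [sub_mul, smul_sub, sum_sub_distrib, sub_sub_cancel]
  have hlower := card_mul_norm_w_le c' hcard hT
  have hupper := (norm_sub_le_of_le (norm_sum_smul_L_mul_V_le c c' hS hT)
    (norm_sum_smul_mul_V_le c' hbound hT (c.L - c'.L)))
  rw [← hsplit] at hupper
  refine le_of_mul_le_mul_left ?_ hpos
  linarith

end Distance

end CodingSystem

lemma exists_forall_nhds_exists_ne_mem {I E : Type*} [Uncountable I] [TopologicalSpace E]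
    [SecondCountableTopology E] (f : I → E) : ∃ i, ∀ u ∈ nhds (f i), ∃ j ≠ i, f j ∈ u := by
  by_contra! hsep
  let _ : TopologicalSpace I := .induced f inferInstance
  have : SecondCountableTopology I := TopologicalSpace.secondCountableTopology_induced I E f
  have : DiscreteTopology I := discreteTopology_iff_nhds.2 fun i => by
    obtain ⟨u, hu, hji⟩ := hsep i
    refine le_antisymm ?_ (pure_le_nhds i)
    rw [Filter.le_pure_iff, nhds_induced]
    refine ⟨u, hu, fun j hj => ?_⟩
    by_contra hne
    exact hji j hne hj
  exact not_countable (TopologicalSpace.separableSpace_iff_countable.1 inferInstance : Countable I)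

/-- The parameters `(x, y, L, w, K)` of a coding system. -/
abbrev CodingData (ι B : Type*) : Type _ := (ι → B) × B × B × B × ℝ

/-- The excess of the two sides in `CodingSystem.norm_w_le`, a continuous function of the data
which is positive for equal data with `w ≠ 0`. -/
def CodingData.gap {ι B : Type*} [Fintype ι] [NonUnitalNormedRing B] (d d' : CodingData ι B) : ℝ :=
  ‖d'.2.2.2.1‖ - 2 * (d.2.2.2.2 * d'.2.2.2.2 *
    (∑ i, ‖d.1 i - d'.1 i‖ + ‖d.2.1 - d'.2.1‖) + d'.2.2.2.2 * ‖d.2.2.1 - d'.2.2.1‖)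

lemma CodingData.continuous_gap {ι B : Type*} [Fintype ι] [NonUnitalNormedRing B] :
    Continuous fun p : CodingData ι B × CodingData ι B => CodingData.gap p.1 p.2 := by
  unfold CodingData.gap
  fun_prop

namespace CodingSystem

variable {σ s S} {T : Set κ} {B : Type*} [NonUnitalNormedRing B] [NormedSpace ℂ B]

/-- The parameters of a coding system which do not depend on the blocks. -/
def data (c : CodingSystem σ s S B) : CodingData ι B := (c.x, c.y, c.L, c.w, c.K)

lemma gap_self_pos (c : CodingSystem σ s S B) : 0 < c.data.gap c.data := by
  simp [CodingData.gap, data, c.w_ne_zero]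

variable [∀ k, Fintype (Q k)] [∀ k, Nonempty (Q k)] [IsScalarTower ℂ B B]

lemma subset_of_gap_pos (hbound : ∀ k j, |s k j| ≤ 1)
    (hcard : ∀ k, Fintype.card (Q k) ≤ 2 * ∑ j, s k j ^ 2) (c : CodingSystem σ s S B)
    (c' : CodingSystem σ s T B) (hgap : 0 < c.data.gap c'.data) : S ⊆ T := by
  intro k hS
  by_contra hT
  exact hgap.not_ge (sub_nonpos.2 (norm_w_le c c' (hbound k) (hcard k) hS hT))

/-- Two of uncountably many systems in a separable algebra have data with positive gaps. -/
lemma not_forall_nonempty [Infinite κ] [TopologicalSpace.SeparableSpace B]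
    (hbound : ∀ k j, |s k j| ≤ 1) (hcard : ∀ k, Fintype.card (Q k) ≤ 2 * ∑ j, s k j ^ 2) :
    ¬ ∀ S : Set κ, Nonempty (CodingSystem σ s S B) := by
  intro hsys
  let c (S : Set κ) : CodingSystem σ s S B := (hsys S).some
  have : SecondCountableTopology B := UniformSpace.secondCountable_of_separable B
  have : Uncountable (Set κ) := Cardinal.aleph0_lt_mk_iff.1 <| by
    rw [Cardinal.mk_set]
    exact (Cardinal.aleph0_le_mk κ).trans_lt (Cardinal.cantor _)
  obtain ⟨S, hS⟩ := exists_forall_nhds_exists_ne_mem fun S => (c S).data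
  have hcont₁ : Continuous fun d => (c S).data.gap d :=
    CodingData.continuous_gap.comp (by fun_prop : Continuous fun d => ((c S).data, d))
  have hcont₂ : Continuous fun d => CodingData.gap d (c S).data :=
    CodingData.continuous_gap.comp (by fun_prop : Continuous fun d => (d, (c S).data))
  obtain ⟨T, hne, hgap₁, hgap₂⟩ := hS _ <| Filter.inter_mem
    (hcont₁.continuousAt.eventually_const_lt (c S).gap_self_pos)
    (hcont₂.continuousAt.eventually_const_lt (c S).gap_self_pos)
  exact hne (Set.Subset.antisymm (subset_of_gap_pos hbound hcard _ _ hgap₂)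
    (subset_of_gap_pos hbound hcard _ _ hgap₁))

end CodingSystem

end CodingSystem

section CodingAlgebra

lemma exists_sepBanachAlgebra_isometry {E : Type} [NormedRing E] [NormedAlgebra ℂ E]
    [CompleteSpace E] {s : Set E} (hs : s.Countable) :
    ∃ A : SepBanachAlgebra, ∃ f : A.carrier →ₙₐ[ℂ] E, (∀ a, ‖f a‖ = ‖a‖) ∧ s ⊆ Set.range f := by
  let A := (Algebra.adjoin ℂ s).topologicalClosure
  have hmonoid : (Submonoid.closure s : Set E).Countable := by
    rw [Submonoid.closure_eq_mrange, MonoidHom.coe_mrange]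
    have := hs.to_subtype
    have : Countable (FreeMonoid s) := inferInstanceAs (Countable (List s))
    exact Set.countable_range _
  have hsep : TopologicalSpace.IsSeparable (A : Set E) := by
    have hspan := (hmonoid.isSeparable.span (R := ℂ)).closure
    rwa [← Algebra.adjoin_eq_span] at hspan
  have : TopologicalSpace.SeparableSpace A := hsep.separableSpace
  have : CompleteSpace A := (Subalgebra.isClosed_topologicalClosure _).completeSpace_coe
  exact ⟨⟨A⟩, (A.val : A →ₙₐ[ℂ] E), fun _ => rfl, fun x hx =>
    ⟨⟨x, Subalgebra.le_topologicalClosure _ (Algebra.subset_adjoin hx)⟩, rfl⟩⟩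

/-- The coding system on `ℂ × E × F` in which `V` maps `ℂ` to `E`, `x` and `y` map `E` to `F`, `U`
maps `F` to `ℂ`, `L` maps `E` to `ℂ` and `w` is the projection to `ℂ`. -/
def codingSystemOfOperators {κ ι E F : Type*} [Fintype ι] {Q : κ → Type*}
    {σ : ∀ k, ι → Equiv.Perm (Q k)} {s : ∀ k, Q k → ℝ} {S : Set κ} [NormedAddCommGroup E]
    [NormedSpace ℂ E] [NormedAddCommGroup F] [NormedSpace ℂ F] (x : ι → E →L[ℂ] F) (y : E →L[ℂ] F)
    (L : E →L[ℂ] ℂ) (U : ∀ k : S, Q k → F →L[ℂ] ℂ) (V : ∀ m : ↥Sᶜ, Q m → E) {K : ℝ}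
    (hU : ∀ k j, ‖U k j‖ ≤ K) (hV : ∀ m g, ‖V m g‖ ≤ K)
    (hUx : ∀ k j z, ∑ i, U k ((σ k i).symm j) (x i z) - U k j (y z) = s k j * L z)
    (hxV : ∀ m g, ∑ i, x i (V m (σ m i g)) = y (V m g)) (hLV : ∀ m g, L (V m g) = s m g) :
    CodingSystem σ s S ((ℂ × E × F) →L[ℂ] ℂ × E × F) where
  x i := .inr ℂ _ _ ∘L .inr ℂ _ _ ∘L x i ∘L .fst ℂ _ _ ∘L .snd ℂ _ _
  y := .inr ℂ _ _ ∘L .inr ℂ _ _ ∘L y ∘L .fst ℂ _ _ ∘L .snd ℂ _ _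
  L := .inl ℂ _ _ ∘L L ∘L .fst ℂ _ _ ∘L .snd ℂ _ _
  w := .inl ℂ _ _ ∘L .fst ℂ _ _
  U k j := .inl ℂ _ _ ∘L U k j ∘L .snd ℂ _ _ ∘L .snd ℂ _ _
  V m g := (ContinuousLinearMap.fst ℂ _ _).smulRight (0, V m g, 0)
  K := K
  norm_U_le k j := by
    refine ContinuousLinearMap.opNorm_le_bound _ ((norm_nonneg _).trans (hU k j)) fun z => ?_
    simpa using (U k j).le_of_opNorm_le_of_le (hU k j) ((norm_snd_le z.2).trans (norm_snd_le z))
  norm_V_le m g := by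
    rw [ContinuousLinearMap.norm_smulRight_apply]
    refine (mul_le_of_le_one_left (norm_nonneg _) (ContinuousLinearMap.norm_fst_le ..)).trans ?_
    simpa [Prod.norm_def] using hV m g
  sum_U_mul_x k j := by
    ext z <;> simp [Prod.fst_sum, Prod.snd_sum, ← hUx]
  sum_x_mul_V m g := by
    ext z <;> simp [Prod.snd_sum, ← hxV]
  L_mul_V m g := by
    ext z <;> simp [hLV]
  w_ne_zero h := one_ne_zero (congrArg Prod.fst (DFunLike.congr_fun h ((1, 0, 0) : ℂ × E × F)))

variable {κ ι : Type*} {Q : κ → Type*}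

variable (Q) in
/-- Bounded functions on the disjoint union of the blocks indexed by `S`. -/
abbrev BlockSpace (S : Set κ) : Type _ := lp (fun _ : Σ k : S, Q k => ℂ) ⊤

/-- The evaluation functional at a point of a block. -/
def blockEval {S : Set κ} (k : S) (j : Q k) : BlockSpace Q S →L[ℂ] ℂ :=
  lp.evalCLM ℂ (fun _ => ℂ) ⊤ ⟨k, j⟩

lemma norm_blockEval_le {S : Set κ} (k : S) (j : Q k) : ‖blockEval k j‖ ≤ 1 :=
  ContinuousLinearMap.opNorm_le_bound _ zero_le_one fun b => by
    rw [one_mul]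
    exact lp.norm_apply_le_norm ENNReal.top_ne_zero b _

lemma exists_blockEval_eq {S : Set κ} {C : ℝ} (hC : 0 ≤ C) (f : ∀ k : S, Q k → ℝ)
    (hf : ∀ k j, |f k j| ≤ C) :
    ∃ b : BlockSpace Q S, ‖b‖ ≤ C ∧ ∀ k j, blockEval k j b = f k j := by
  have hnorm (t : Σ k : S, Q k) : ‖(f t.1 t.2 : ℂ)‖ ≤ C :=
    (Complex.norm_real _).trans_le (hf t.1 t.2)
  let b : BlockSpace Q S := ⟨fun t => (f t.1 t.2 : ℂ),
    memℓp_infty ⟨C, Set.forall_mem_range.2 hnorm⟩⟩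
  exact ⟨b, lp.norm_le_of_forall_le hC hnorm, fun _ _ => rfl⟩

lemma blockSpace_ext {S : Set κ} {b b' : BlockSpace Q S}
    (h : ∀ k j, blockEval k j b = blockEval k j b') : b = b' :=
  lp.ext (funext fun t => h t.1 t.2)

variable [Fintype ι] (σ : ∀ k, ι → Equiv.Perm (Q k)) (s : ∀ k, Q k → ℝ) (S : Set κ)

variable {S} in
/-- The defect at the point `j` of the relation `CodingSystem.sum_U_mul_x`, applied to a vector
with coordinates `(L, x, y)`. -/
def defect (k : S) (j : Q k) : ℂ × (ι → BlockSpace Q S) × BlockSpace Q S →L[ℂ] ℂ :=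
  ∑ i, blockEval k ((σ k i).symm j) ∘L .proj i ∘L .fst ℂ _ _ ∘L .snd ℂ _ _
    - blockEval k j ∘L .snd ℂ _ _ ∘L .snd ℂ _ _ - (s k j : ℂ) • .fst ℂ _ _

variable {σ s S} in
lemma defect_apply (k : S) (j : Q k) (z : ℂ × (ι → BlockSpace Q S) × BlockSpace Q S) :
    defect σ s k j z =
      ∑ i, blockEval k ((σ k i).symm j) (z.2.1 i) - blockEval k j z.2.2 - s k j * z.1 := by
  simp [defect]

/-- The coordinates `(L, x, y)` satisfying the relation `CodingSystem.sum_U_mul_x`. -/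
def middleSpace : Submodule ℂ (ℂ × (ι → BlockSpace Q S) × BlockSpace Q S) :=
  ⨅ (k : S) (j : Q k), (defect σ s k j).ker

variable {σ s S} in
lemma mem_middleSpace {z : ℂ × (ι → BlockSpace Q S) × BlockSpace Q S} :
    z ∈ middleSpace σ s S ↔ ∀ k j, defect σ s k j z = 0 := by
  simp [middleSpace]

instance : CompleteSpace (middleSpace σ s S) := by
  have hclosed : IsClosed (X := ℂ × (ι → BlockSpace Q S) × BlockSpace Q S) (middleSpace σ s S) := by
    simp only [middleSpace, Submodule.coe_iInf]
    exact isClosed_iInter fun k => isClosed_iInter fun j => (defect σ s k j).isClosed_ker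
  exact hclosed.completeSpace_coe

section Column

variable [∀ k, Fintype (Q k)] {σ s S} {C : ℝ}

/-- On the block `k`, the coordinates of `v g` are slices at `g` of a family `G k` with bounded
entries whose coboundary is `s k ⊗ s m`. -/
lemma exists_middleSpace_column (hC : 0 ≤ C) (hbound : ∀ k j, |s k j| ≤ 1)
    (hsum : ∀ k, ∑ j, s k j = 0) {m : κ} (hm : m ∉ S)
    (hσ : ∀ k ≠ m, HasBoundedCoboundaries (fun i => (σ k i).prodCongr (σ m i)) C) :
    ∃ v : Q m → middleSpace σ s S, (∀ g, ‖v g‖ ≤ max 1 (max C (Fintype.card ι * C))) ∧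
      (∀ g, (v g).1.1 = s m g) ∧ ∀ g, ∑ i, (v (σ m i g)).1.2.1 i = (v g).1.2.2 := by
  have hcob (k : S) : ∃ G : ι → Q k × Q m → ℝ, (∀ i t, |G i t| ≤ C) ∧
      coboundary (fun i => (σ k i).prodCongr (σ m i)) G = fun t => s k t.1 * s m t.2 := by
    refine hσ k (fun h => hm (h ▸ k.2)) _ (fun t => ?_) ?_
    · rw [abs_mul]
      exact mul_le_one₀ (hbound _ _) (abs_nonneg _) (hbound _ _)
    · rw [Fintype.sum_prod_type, ← Fintype.sum_mul_sum, hsum, zero_mul]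
  choose G hG hGs using hcob
  have hx (g : Q m) (i : ι) := exists_blockEval_eq hC
    (fun k j => G k i (j, (σ m i).symm g)) fun k j => hG k i _
  choose x hxC hx using hx
  have hy (g : Q m) := exists_blockEval_eq (mul_nonneg (Fintype.card ι).cast_nonneg hC)
    (fun (k : S) j => ∑ i, G k i (j, g)) fun k j => by
      rw [← nsmul_eq_mul]
      exact (abs_sum_le_sum_abs _ _).trans (sum_le_card_nsmul _ _ _ fun i _ => hG k i _)
  choose y hyC hy using hy
  refine ⟨fun g => ⟨(s m g, x g, y g), mem_middleSpace.2 fun k j => ?_⟩, fun g => ?_,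
    fun g => rfl, fun g => blockSpace_ext fun k j => ?_⟩
  · have h := congrFun (hGs k) (j, g)
    simp only [coboundary_apply, Equiv.prodCongr_symm, Equiv.prodCongr_apply, Prod.map_apply,
      sum_sub_distrib] at h
    simp only [defect_apply, hx, hy]
    exact_mod_cast sub_eq_zero.2 h
  · exact max_le_max ((Complex.norm_real _).trans_le (hbound m g))
      (max_le_max ((pi_norm_le_iff_of_nonneg hC).2 (hxC g)) (hyC g))
  · simp [hx, hy]

lemma nonempty_codingSystem (hC : 0 ≤ C) (hbound : ∀ k j, |s k j| ≤ 1)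
    (hsum : ∀ k, ∑ j, s k j = 0)
    (hσ : ∀ k m, k ≠ m → HasBoundedCoboundaries (fun i => (σ k i).prodCongr (σ m i)) C) :
    Nonempty (CodingSystem σ s S
      ((ℂ × middleSpace σ s S × BlockSpace Q S) →L[ℂ] ℂ × middleSpace σ s S × BlockSpace Q S)) := by
  choose V hVK hVL hVx using fun m : ↥Sᶜ =>
    exists_middleSpace_column hC hbound hsum m.2 fun k hk => hσ k m hk
  let coords := (middleSpace σ s S).subtypeL
  let proj (i : ι) : (ι → BlockSpace Q S) →L[ℂ] BlockSpace Q S := .proj i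
  refine ⟨codingSystemOfOperators (fun i => proj i ∘L .fst ℂ _ _ ∘L .snd ℂ _ _ ∘L coords)
    (.snd ℂ _ _ ∘L .snd ℂ _ _ ∘L coords) (.fst ℂ _ _ ∘L coords) blockEval V
    (fun k j => (norm_blockEval_le k j).trans (le_max_left _ _)) hVK (fun k j z => ?_) hVx hVL⟩
  have hz := mem_middleSpace.1 z.2 k j
  rwa [defect_apply, sub_eq_zero] at hz

end Column

end CodingAlgebra

lemma exists_sepBanachAlgebra_nonempty_codingSystem {κ ι : Type} [Countable κ] [Fintype ι]
    {Q : κ → Type} [∀ k, Fintype (Q k)] {σ : ∀ k, ι → Equiv.Perm (Q k)} {s : ∀ k, Q k → ℝ}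
    {C : ℝ} (hC : 0 ≤ C) (hbound : ∀ k j, |s k j| ≤ 1) (hsum : ∀ k, ∑ j, s k j = 0)
    (hσ : ∀ k m, k ≠ m → HasBoundedCoboundaries (fun i => (σ k i).prodCongr (σ m i)) C)
    (S : Set κ) : ∃ A : SepBanachAlgebra, Nonempty (CodingSystem σ s S A.carrier) := by
  obtain ⟨c⟩ := nonempty_codingSystem (S := S) hC hbound hsum hσ
  obtain ⟨A, f, hf, hc⟩ := exists_sepBanachAlgebra_isometry c.countable_elements
  exact ⟨A, c.nonempty_of_elements_subset_range f hf hc⟩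

section QuadraticResidues

/-- The odd primes, which index the blocks. -/
abbrev OddPrime : Type := {p : ℕ // p.Prime ∧ p ≠ 2}

instance : Infinite OddPrime :=
  (Nat.infinite_setOfPred_prime.sdiff (Set.finite_singleton 2)).to_subtype

instance (p : OddPrime) : Fact (p : ℕ).Prime := ⟨p.2.1⟩

/-- The quadratic character of the first coordinate, a function on the torus with mean zero. -/
def torusSign (p : OddPrime) (x : ZMod p × ZMod p) : ℝ := (quadraticChar (ZMod p) x.1 : ℤ)

lemma abs_torusSign_le (p : OddPrime) (x : ZMod p × ZMod p) : |torusSign p x| ≤ 1 := by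
  unfold torusSign
  by_cases hx : x.1 = 0
  · simp [hx]
  · rcases quadraticChar_dichotomy hx with h | h <;> simp [h]

lemma sum_torusSign (p : OddPrime) : ∑ x, torusSign p x = 0 := by
  have hp : ringChar (ZMod p) ≠ 2 := by
    rw [ZMod.ringChar_zmod_n]
    exact p.2.2
  rw [Fintype.sum_prod_type_right]
  simp only [torusSign, ← Int.cast_sum, quadraticChar_sum_zero hp, Int.cast_zero, sum_const_zero]

lemma card_le_two_mul_sum_torusSign_sq (p : OddPrime) :
    Fintype.card (ZMod p × ZMod p) ≤ 2 * ∑ x, torusSign p x ^ 2 := by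
  have hsq (x : ZMod p × ZMod p) : torusSign p x ^ 2 = 1 - if x.1 = 0 then 1 else 0 := by
    unfold torusSign
    split_ifs with hx
    · simp [hx]
    · rw [← Int.cast_pow, quadraticChar_sq_one hx, Int.cast_one, sub_zero]
  have hp : (2 : ℝ) ≤ p := by exact_mod_cast p.2.1.two_le
  simp only [hsq, sum_sub_distrib, Fintype.sum_prod_type_right, sum_const, sum_ite_eq', mem_univ,
    if_true, card_univ, ZMod.card, Fintype.card_prod, nsmul_eq_mul, Nat.cast_mul, mul_one]
  nlinarith

end QuadraticResidues

end

theorem no_universal_separable_Banach_algebra_contractive_general (B : Type*)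
    [NonUnitalNormedRing B] [NormedSpace ℂ B] [IsScalarTower ℂ B B]
    [TopologicalSpace.SeparableSpace B] :
    ∃ A : SepBanachAlgebra,
      ¬ ∃ φ : A.carrier →ₙₐ[ℂ] B, Function.Injective φ ∧ Continuous φ := by
  by_contra! hB
  refine CodingSystem.not_forall_nonempty (B := B) (σ := fun p : OddPrime => torusMove (ZMod p))
    abs_torusSign_le card_le_two_mul_sum_torusSign_sq fun S => ?_
  obtain ⟨A, ⟨c⟩⟩ := exists_sepBanachAlgebra_nonempty_codingSystem (by norm_num) abs_torusSign_le
    sum_torusSign (fun p q hpq => hasBoundedCoboundaries_torusMove_prod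
      ((Nat.coprime_primes p.2.1 q.2.1).2 fun h => hpq (Subtype.ext h))) S
  obtain ⟨φ, hinj, hcont⟩ := hB A
  exact ⟨c.map φ hinj hcont⟩

/-- There is no separable complex Banach algebra `B` such that every separable
complex Banach algebra `A` admits a contractive homomorphic embedding into `B`:
for every separable Banach algebra `B` there is a separable Banach algebra `A`
such that no injective algebra homomorphism `φ : A → B` is simultaneously
contractive and bounded below. -/
theorem no_universal_separable_Banach_algebra_contractive
    (B : SepBanachAlgebra) :
    ∃ A : SepBanachAlgebra,
      ¬ ∃ φ : A.carrier →ₙₐ[ℂ] B.carrier,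
        Function.Injective φ ∧
        (∀ a : A.carrier, ‖φ a‖ ≤ ‖a‖) ∧
        (∃ c : ℝ, 0 < c ∧ ∀ a : A.carrier, c * ‖a‖ ≤ ‖φ a‖) := by
  obtain ⟨A, hA⟩ := no_universal_separable_Banach_algebra_contractive_general B.carrier
  exact ⟨A, fun ⟨φ, hinj, hle, _⟩ =>
    hA ⟨φ, hinj, AddMonoidHomClass.continuous_of_bound φ 1 (by simpa only [one_mul] using hle)⟩⟩
end
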